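/- Let α > 0 be a real number that is not an integer, let β ≥ 0 be real, and let δ be a real number with δ ≥ ⌈α⌉ + 1. Suppose that one of the following holds: (1) β is a nonnegative integer; (2) α = β; (3) ⌊β⌋ < α ≤ β. Then F_n^{(α,β),δ}(t) > 0 for all t ∈ (0, π] and all n ∈ ℕ (n ≥ 0). -/

import Mathlib

open MeasureTheory Real Set

/-- Generalized binomial coefficient `C(u, v) = Γ(u+1) / (Γ(v+1) Γ(u-v+1))`. -/
noncomputable def genBinom (u v : ℝ) : ℝ :=
  Real.Gamma (u + 1) / (Real.Gamma (v + 1) * Real.Gamma (u - v + 1))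

/-- Jacobi polynomial `P_n^{(a,b)}(x)`. -/
noncomputable def jacobiP (n : ℕ) (a b x : ℝ) : ℝ :=
  ∑ k ∈ Finset.range (n + 1),
    genBinom ((n : ℝ) + a) ((n : ℝ) - (k : ℝ)) * genBinom ((n : ℝ) + b) (k : ℝ) *
      ((x - 1) / 2) ^ k * ((x + 1) / 2) ^ (n - k)

/-- `F_n^{(α,β),δ}(t)`. -/
noncomputable def FJ (n : ℕ) (α β δ t : ℝ) : ℝ :=
  ∫ θ in (0:ℝ)..t, (t - θ) ^ δ * jacobiP n (α - 1/2) (β - 1/2) (Real.cos θ) *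
    (Real.sin (θ / 2)) ^ (2 * α) * (Real.cos (θ / 2)) ^ (2 * β)


noncomputable def jc (n : ℕ) (a b : ℝ) (k : ℕ) : ℝ :=
  (-1) ^ k * genBinom ((n : ℝ) + a) ((n : ℝ) - (k : ℝ)) * genBinom ((n : ℝ) + b) (k : ℝ)

noncomputable def pU : Polynomial ℝ := Polynomial.C (1/2) * (1 - Polynomial.X)
noncomputable def pV : Polynomial ℝ := Polynomial.C (1/2) * (1 + Polynomial.X)

noncomputable def JP (n : ℕ) (a b : ℝ) : Polynomial ℝ :=
  ∑ k ∈ Finset.range (n + 1), Polynomial.C (jc n a b k) * pU ^ k * pV ^ (n - k)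

lemma JP_eval (n : ℕ) (a b x : ℝ) : (JP n a b).eval x = jacobiP n a b x := by
  unfold JP jacobiP
  rw [Polynomial.eval_finsetSum]
  refine Finset.sum_congr rfl fun k _ => ?_
  simp only [pU, pV, jc, Polynomial.eval_mul, Polynomial.eval_C, Polynomial.eval_pow,
    Polynomial.eval_sub, Polynomial.eval_add, Polynomial.eval_one, Polynomial.eval_X]
  rw [show (x - 1) / 2 = (-1) * (1 / 2 * (1 - x)) by ring, mul_pow (-1 : ℝ),
    show (x + 1) / 2 = 1 / 2 * (1 + x) by ring]
  ring

lemma pU_add_pV : pU + pV = 1 := by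
  unfold pU pV
  rw [← mul_add, show (1 - Polynomial.X + (1 + Polynomial.X) : Polynomial ℝ) = Polynomial.C 2 by
    rw [show (2:ℝ) = 1 + 1 by norm_num, Polynomial.C_add, Polynomial.C_1]; ring, ← Polynomial.C_mul]
  norm_num

/-- recurrence in k -/
lemma jc_zero_of_gt (n : ℕ) (a b : ℝ) (k : ℕ) (h : n < k) : jc n a b k = 0 := by
  unfold jc genBinom
  obtain ⟨m, rfl⟩ := Nat.exists_eq_add_of_lt h
  have : Real.Gamma ((n:ℝ) - ((n + m + 1 : ℕ) : ℝ) + 1) = 0 := by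
    rw [show ((n:ℝ) - ((n + m + 1 : ℕ) : ℝ) + 1) = - (m:ℝ) by push_cast; ring]
    exact Real.Gamma_neg_nat_eq_zero m
  rw [this]; simp

/-- explicit form for n = k + r -/
lemma jc_add (k r : ℕ) (a b : ℝ) : jc (k + r) a b k =
   (-1) ^ k * (Real.Gamma (k + r + a + 1) * Real.Gamma (k + r + b + 1)) /
     (Real.Gamma (r + 1) * Real.Gamma (k + 1) * Real.Gamma (a + k + 1) * Real.Gamma (b + r + 1)) := by
  unfold jc genBinom
  push_cast
  rw [show (k:ℝ) + r - k + 1 = r + 1 by ring, show (k:ℝ) + r + a - (k + r - k) + 1 = a + k + 1 by ring,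
    show (k:ℝ) + r + b - k + 1 = b + r + 1 by ring]
  rw [mul_div_assoc', mul_div_assoc', div_mul_eq_mul_div, div_div]
  ring

lemma jc_zero_pos (n : ℕ) (a b : ℝ) (ha : -1 < a) (hb : -1 < b) : 0 < jc n a b 0 := by
  have := jc_add 0 n a b
  rw [zero_add] at this
  rw [this]
  have hn : (0:ℝ) ≤ n := n.cast_nonneg
  have h1 : 0 < Real.Gamma ((0:ℕ) + n + a + 1) := Real.Gamma_pos_of_pos (by push_cast; linarith)
  have h2 : 0 < Real.Gamma ((0:ℕ) + n + b + 1) := Real.Gamma_pos_of_pos (by push_cast; linarith)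
  have h3 : 0 < Real.Gamma (n + 1) := Real.Gamma_pos_of_pos (by linarith)
  have h4 : 0 < Real.Gamma ((0:ℕ) + 1) := Real.Gamma_pos_of_pos (by push_cast; linarith)
  have h5 : 0 < Real.Gamma (a + (0:ℕ) + 1) := Real.Gamma_pos_of_pos (by push_cast; linarith)
  have h6 : 0 < Real.Gamma (b + n + 1) := Real.Gamma_pos_of_pos (by push_cast; linarith)
  rw [pow_zero, one_mul]
  positivity

lemma gam (x : ℝ) (hx : 0 < x) : Real.Gamma (x + 1) = x * Real.Gamma x := Real.Gamma_add_one hx.ne'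

/-- n = k+1+r : index k+1 versus index k -/
lemma jc_succ (n k : ℕ) (a b : ℝ) (ha : -1 < a) (hb : -1 < b) :
    ((k:ℝ) + 1) * (a + k + 1) * jc n a b (k + 1) = -((n:ℝ) - k) * (n + b - k) * jc n a b k := by
  have hk : (0:ℝ) ≤ k := k.cast_nonneg
  rcases lt_trichotomy n k with h | h | h
  · rw [jc_zero_of_gt _ _ _ _ h, jc_zero_of_gt n a b (k+1) (by omega)]; simp
  · subst h; rw [jc_zero_of_gt n a b (n+1) (by omega)]; simp
  · obtain ⟨r, rfl⟩ := Nat.exists_eq_add_of_lt h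
    have hr : (0:ℝ) ≤ r := r.cast_nonneg
    have e1 := jc_add (k+1) r a b
    have e2 := jc_add k (r+1) a b
    rw [show k + 1 + r = k + r + 1 by ring] at e1
    rw [show k + (r + 1) = k + r + 1 by ring] at e2
    rw [e1, e2]
    push_cast
    rw [show (k:ℝ) + 1 + r + a + 1 = (k + (r + 1) + a + 1) by ring,
      show (k:ℝ) + 1 + r + b + 1 = (k + (r + 1) + b + 1) by ring,
      show a + ((k:ℝ) + 1) + 1 = (a + k + 1) + 1 by ring,
      show b + ((r:ℝ) + 1) + 1 = (b + r + 1) + 1 by ring,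
      gam (k+1) (by linarith), gam (r+1) (by linarith), gam (a + k + 1) (by linarith),
      gam (b+r+1) (by linarith)]
    have h3 : 0 < Real.Gamma (r + 1) := Real.Gamma_pos_of_pos (by linarith)
    have h4 : 0 < Real.Gamma (k + 1) := Real.Gamma_pos_of_pos (by linarith)
    have h5 : 0 < Real.Gamma (a + k + 1) := Real.Gamma_pos_of_pos (by linarith)
    have h6 : 0 < Real.Gamma (b + r + 1) := Real.Gamma_pos_of_pos (by linarith)
    have h7 : 0 < (r:ℝ) + 1 := by linarith
    have h8 : 0 < (k:ℝ) + 1 := by linarith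
    have h9 : 0 < a + (k:ℝ) + 1 := by linarith
    have h10 : 0 < b + (r:ℝ) + 1 := by linarith
    field_simp
    ring

/-- (n+1, k) to (n; a+1, b+1; k) -/
lemma jc_deriv (n k : ℕ) (a b : ℝ) (ha : -1 < a) (hb : -1 < b) :
    (a + k + 1) * jc n (a + 1) (b + 1) k = ((n:ℝ) + 1 - k) * jc (n + 1) a b k := by
  have hk : (0:ℝ) ≤ k := k.cast_nonneg
  rcases le_or_gt k n with h | h
  · obtain ⟨r, rfl⟩ := Nat.exists_eq_add_of_le h
    have hr : (0:ℝ) ≤ r := r.cast_nonneg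
    have e2 := jc_add k (r+1) a b
    rw [show k + (r + 1) = k + r + 1 by ring] at e2
    rw [jc_add, e2]
    push_cast
    rw [show (k:ℝ) + r + (a + 1) + 1 = (k + (r + 1) + a + 1) by ring,
      show (k:ℝ) + r + (b + 1) + 1 = (k + (r + 1) + b + 1) by ring,
      show b + ((r:ℝ) + 1) + 1 = (b + 1 + r + 1) by ring,
      show a + 1 + (k:ℝ) + 1 = a + k + 1 + 1 by ring,
      gam (r+1) (by linarith), gam (a + k + 1) (by linarith)]
    have h3 : 0 < Real.Gamma (r + 1) := Real.Gamma_pos_of_pos (by linarith)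
    have h4 : 0 < Real.Gamma (k + 1) := Real.Gamma_pos_of_pos (by linarith)
    have h5 : 0 < Real.Gamma (a + k + 1) := Real.Gamma_pos_of_pos (by linarith)
    have h6 : 0 < Real.Gamma (b + 1 + r + 1) := Real.Gamma_pos_of_pos (by linarith)
    have h7 : 0 < (r:ℝ) + 1 := by linarith
    have h9 : 0 < a + (k:ℝ) + 1 := by linarith
    field_simp
    ring
  · rw [jc_zero_of_gt _ _ _ _ h]
    rcases Nat.lt_or_ge (n+1) k with h' | h'
    · rw [jc_zero_of_gt _ _ _ _ h']; simp
    · have : k = n + 1 := by omega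
      subst this; push_cast; simp

lemma jc_b (n k : ℕ) (a b : ℝ) (ha : -1 < a) (hb : -1 < b) :
    ((n:ℝ) + b + 1 - k) * jc n a (b + 1) k = ((n:ℝ) + b + 1) * jc n a b k := by
  have hk : (0:ℝ) ≤ k := k.cast_nonneg
  rcases le_or_gt k n with h | h
  · obtain ⟨r, rfl⟩ := Nat.exists_eq_add_of_le h
    have hr : (0:ℝ) ≤ r := r.cast_nonneg
    rw [jc_add, jc_add]
    push_cast
    rw [show (k:ℝ) + r + (b + 1) + 1 = (k + r + b + 1) + 1 by ring,
      show b + 1 + (r:ℝ) + 1 = b + r + 1 + 1 by ring,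
      gam (k + r + b +1) (by linarith), gam (b + r + 1) (by linarith)]
    have h3 : 0 < Real.Gamma (r + 1) := Real.Gamma_pos_of_pos (by linarith)
    have h4 : 0 < Real.Gamma (k + 1) := Real.Gamma_pos_of_pos (by linarith)
    have h5 : 0 < Real.Gamma (a + k + 1) := Real.Gamma_pos_of_pos (by linarith)
    have h6 : 0 < Real.Gamma (b + r + 1) := Real.Gamma_pos_of_pos (by linarith)
    have h7 : 0 < b + (r:ℝ) + 1 := by linarith
    field_simp
    ring
  · rw [jc_zero_of_gt _ _ _ _ h, jc_zero_of_gt _ _ _ _ h]; simp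

lemma jc_a (n k : ℕ) (a b : ℝ) (ha : -1 < a) (hb : -1 < b) :
    ((n:ℝ) + a + 1) * jc n a b k = (a + k + 1) * jc n (a + 1) b k := by
  have hk : (0:ℝ) ≤ k := k.cast_nonneg
  rcases le_or_gt k n with h | h
  · obtain ⟨r, rfl⟩ := Nat.exists_eq_add_of_le h
    have hr : (0:ℝ) ≤ r := r.cast_nonneg
    rw [jc_add, jc_add]
    push_cast
    rw [show (k:ℝ) + r + (a + 1) + 1 = (k + r + a + 1) + 1 by ring,
      show a + 1 + (k:ℝ) + 1 = a + k + 1 + 1 by ring,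
      gam (k + r + a +1) (by linarith), gam (a + k + 1) (by linarith)]
    have h3 : 0 < Real.Gamma (r + 1) := Real.Gamma_pos_of_pos (by linarith)
    have h4 : 0 < Real.Gamma (k + 1) := Real.Gamma_pos_of_pos (by linarith)
    have h5 : 0 < Real.Gamma (a + k + 1) := Real.Gamma_pos_of_pos (by linarith)
    have h6 : 0 < Real.Gamma (b + r + 1) := Real.Gamma_pos_of_pos (by linarith)
    have h7 : 0 < a + (k:ℝ) + 1 := by linarith
    field_simp
  · rw [jc_zero_of_gt _ _ _ _ h, jc_zero_of_gt _ _ _ _ h]; simp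

/-- (n+1,k) vs (n,k) -/
lemma jc_n (n k : ℕ) (a b : ℝ) (ha : -1 < a) (hb : -1 < b) :
    ((n:ℝ) + 1 - k) * (n + 1 + b - k) * jc (n+1) a b k =
      ((n:ℝ) + a + 1) * (n + b + 1) * jc n a b k := by
  have hk : (0:ℝ) ≤ k := k.cast_nonneg
  rcases le_or_gt k n with h | h
  · obtain ⟨r, rfl⟩ := Nat.exists_eq_add_of_le h
    have hr : (0:ℝ) ≤ r := r.cast_nonneg
    have e2 := jc_add k (r+1) a b
    rw [show k + (r + 1) = k + r + 1 by ring] at e2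
    rw [jc_add, e2]
    push_cast
    rw [show (k:ℝ) + (r + 1) + a + 1 = (k + r + a + 1) + 1 by ring,
      show (k:ℝ) + (r + 1) + b + 1 = (k + r + b + 1) + 1 by ring,
      show b + ((r:ℝ) + 1) + 1 = b + r + 1 + 1 by ring,
      gam (k + r + a +1) (by linarith), gam (k + r + b +1) (by linarith), gam (b + r + 1) (by linarith),
      gam (r + 1) (by linarith)]
    have h3 : 0 < Real.Gamma (r + 1) := Real.Gamma_pos_of_pos (by linarith)
    have h4 : 0 < Real.Gamma (k + 1) := Real.Gamma_pos_of_pos (by linarith)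
    have h5 : 0 < Real.Gamma (a + k + 1) := Real.Gamma_pos_of_pos (by linarith)
    have h6 : 0 < Real.Gamma (b + r + 1) := Real.Gamma_pos_of_pos (by linarith)
    have h7 : 0 < b + (r:ℝ) + 1 := by linarith
    have h8 : 0 < (r:ℝ) + 1 := by linarith
    field_simp
    ring
  · rw [jc_zero_of_gt _ _ _ _ h]
    rcases Nat.lt_or_ge (n+1) k with h' | h'
    · rw [jc_zero_of_gt _ _ _ _ h']; simp
    · have : k = n + 1 := by omega
      subst this; push_cast; simp

lemma hom_shift {R : Type*} [CommRing R] (n : ℕ) (u v : R) (x y z : ℕ → R)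
    (h0 : z 0 = x 0) (hs : ∀ k ≤ n, z (k + 1) = x (k + 1) + y k) (hx : x (n + 1) = 0) :
    ∑ k ∈ Finset.range (n + 1), (x k * v + y k * u) * (u ^ k * v ^ (n - k)) =
      ∑ k ∈ Finset.range (n + 1 + 1), z k * (u ^ k * v ^ (n + 1 - k)) := by
  have e1 : ∑ k ∈ Finset.range (n + 1), (x k * v) * (u ^ k * v ^ (n - k)) =
      ∑ k ∈ Finset.range (n + 1 + 1), x k * (u ^ k * v ^ (n + 1 - k)) := by
    rw [Finset.sum_range_succ _ (n+1), hx, zero_mul, add_zero]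
    refine Finset.sum_congr rfl fun k hk => ?_
    have : n + 1 - k = (n - k) + 1 := by have := Finset.mem_range.1 hk; omega
    rw [this, pow_succ]; ring
  have e2 : ∑ k ∈ Finset.range (n + 1), (y k * u) * (u ^ k * v ^ (n - k)) =
      ∑ k ∈ Finset.range (n + 1), y k * (u ^ (k+1) * v ^ (n + 1 - (k + 1))) := by
    refine Finset.sum_congr rfl fun k hk => ?_
    have : n + 1 - (k + 1) = n - k := by omega
    rw [this, pow_succ]; ring
  simp only [add_mul, Finset.sum_add_distrib]
  rw [e1, e2, Finset.sum_range_succ', Finset.sum_range_succ' (fun k => z k * _), h0, add_right_comm,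
    ← Finset.sum_add_distrib]
  congr 1
  refine Finset.sum_congr rfl fun k hk => ?_
  rw [hs k (by have := Finset.mem_range.1 hk; omega)]; ring

open Polynomial in
lemma derivative_pU : derivative pU = C (-1/2) := by
  unfold pU; simp only [derivative_mul, derivative_C, derivative_sub, derivative_one, derivative_X]
  rw [show (-1/2 : ℝ) = -(1/2) by norm_num, C_neg]; ring

open Polynomial in
lemma derivative_pV : derivative pV = C (1/2) := by
  unfold pV; simp only [derivative_mul, derivative_C, derivative_add, derivative_one, derivative_X]
  ring

open Polynomial in
lemma JP_derivative (n : ℕ) (a b : ℝ) (ha : -1 < a) (hb : -1 < b) :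
    derivative (JP (n + 1) a b) = C ((n + a + b + 2) / 2) * JP n (a + 1) (b + 1) := by
  have e : derivative (JP (n + 1) a b) =
      ∑ k ∈ Finset.range (n + 1 + 1), (C (jc (n+1) a b k * k * (-1/2)) * (pU ^ (k - 1) * pV ^ (n + 1 - k)))
      + ∑ k ∈ Finset.range (n + 1 + 1), (C (jc (n+1) a b k * (n + 1 - k) * (1/2)) * (pU ^ k * pV ^ (n - k))) := by
    unfold JP
    rw [derivative_sum, ← Finset.sum_add_distrib]
    refine Finset.sum_congr rfl fun k hk => ?_
    have hk' : k ≤ n + 1 := by have := Finset.mem_range.1 hk; omega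
    rw [derivative_mul, derivative_mul, derivative_pow, derivative_pow, derivative_pU, derivative_pV,
      derivative_C, show n + 1 - k - 1 = n - k by omega]
    have : ((n + 1 - k : ℕ) : ℝ) = n + 1 - k := by push_cast [Nat.cast_sub hk']; ring
    rw [this]
    simp only [C_mul]
    ring
  rw [e, Finset.sum_range_succ', Finset.sum_range_succ _ (n+1)]
  unfold JP
  push_cast
  simp only [sub_self, mul_zero, zero_mul, C_0, add_zero]
  rw [← Finset.sum_add_distrib, Finset.mul_sum]
  refine Finset.sum_congr rfl fun k hk => ?_
  have hk' : (0:ℝ) < a + k + 1 := by have : (0:ℝ) ≤ k := k.cast_nonneg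
                                     linarith
  have key : jc (n+1) a b (k+1) * (k + 1) * (-1/2) + jc (n+1) a b k * (n + 1 - k) * (1/2) =
      (n + a + b + 2) / 2 * jc n (a+1) (b+1) k := by
    have h1 := jc_succ (n+1) k a b ha hb
    have h2 := jc_deriv n k a b ha hb
    push_cast at h1
    apply mul_left_cancel₀ hk'.ne'
    linear_combination (-1/2) * h1 - (n + a + b + 2) / 2 * h2
  have key' := congrArg C key
  simp only [C_mul, C_add] at key' ⊢
  linear_combination (pU ^ k * pV ^ (n - k)) * key'

open Polynomial in
lemma JP_uvD (n : ℕ) (a b A B : ℝ) :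
    pU * pV * derivative (JP n a b) + C (1/2) * (C B * pU - C A * pV) * JP n a b =
     ∑ k ∈ Finset.range (n + 1), (C (-(1/2) * (A + k) * jc n a b k) * pV +
       C (1/2 * (B + n - k) * jc n a b k) * pU) * (pU ^ k * pV ^ (n - k)) := by
  unfold JP
  rw [derivative_sum, Finset.mul_sum, Finset.mul_sum, ← Finset.sum_add_distrib]
  refine Finset.sum_congr rfl fun k hk => ?_
  have hk' : k ≤ n := by have := Finset.mem_range.1 hk; omega
  obtain ⟨r, rfl⟩ := Nat.exists_eq_add_of_le hk'
  rw [show k + r - k = r by omega]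
  rw [derivative_mul, derivative_mul, derivative_pow, derivative_pow, derivative_pU, derivative_pV,
      derivative_C]
  have e1 : pU * (C (k:ℝ) * pU ^ (k - 1)) = C (k:ℝ) * pU ^ k := by
    rcases k with _ | k
    · simp
    · simp only [Nat.add_sub_cancel]; ring
  have e2 : pV * (C (r:ℝ) * pV ^ (r - 1)) = C (r:ℝ) * pV ^ r := by
    rcases r with _ | k
    · simp
    · simp only [Nat.add_sub_cancel]; ring
  push_cast
  rw [show B + ((k:ℝ) + r) - k = B + r by ring]
  simp only [C_mul, C_add, C_neg, neg_div]
  linear_combination (-C (1/2) * C (jc (k + r) a b k) * pV * pV ^ r) * e1 + (C (1/2) * C (jc (k + r) a b k) * pU * pU ^ k) * e2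

open Polynomial in
lemma JP_rodrigues (n : ℕ) (a b : ℝ) (ha : -1 < a) (hb : -1 < b) :
    pU * pV * derivative (JP n (a+1) (b+1)) +
      C (1/2) * (C (b+1) * pU - C (a+1) * pV) * JP n (a+1) (b+1) =
     C (-((n:ℝ)+1)/2) * JP (n+1) a b := by
  rw [JP_uvD, hom_shift n pU pV _ _ (fun k => C (-((n:ℝ)+1)/2 * jc (n+1) a b k))]
  · unfold JP; rw [Finset.mul_sum]
    refine Finset.sum_congr rfl fun k hk => ?_
    rw [C_mul]; ring
  · congr 1
    have h2 := jc_deriv n 0 a b ha hb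
    push_cast at h2 ⊢
    linear_combination (1/2) * h2
  · intro k hk
    rw [← C_add]
    congr 1
    have h1 := jc_succ (n+1) k a b ha hb
    have h2 := jc_deriv n k a b ha hb
    have h3 := jc_deriv n (k+1) a b ha hb
    push_cast at h1 h2 h3 ⊢
    have hk' : (0:ℝ) < a + k + 1 := by
      have : (0:ℝ) ≤ k := k.cast_nonneg
      linarith
    apply mul_left_cancel₀ hk'.ne'
    linear_combination (-1/2) * h1 + (a+k+1)/2 * h3 - (n + 1 + b - k)/2*h2
  · rw [jc_zero_of_gt _ _ _ _ (by omega)]; simp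

open Polynomial in
lemma JP_raise (n : ℕ) (a b : ℝ) (ha : -1 < a) (hb : -1 < b) :
    C (2 * n + a + b + 2) * pV * JP n a (b+1) =
      C ((n:ℝ) + 1) * JP (n+1) a b + C (n + b + 1) * JP n a b := by
  have e : C (2 * n + a + b + 2) * pV * JP n a (b+1) - C (n + b + 1) * (pU + pV) * JP n a b =
      ∑ k ∈ Finset.range (n + 1), (C ((2 * n + a + b + 2) * jc n a (b+1) k - (n + b + 1) * jc n a b k) * pV +
       C (-((n + b + 1) * jc n a b k)) * pU) * (pU ^ k * pV ^ (n - k)) := by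
    unfold JP
    rw [Finset.mul_sum, Finset.mul_sum, ← Finset.sum_sub_distrib]
    refine Finset.sum_congr rfl fun k hk => ?_
    simp only [C_mul, C_add, C_neg, C_sub]
    ring
  rw [pU_add_pV, mul_one] at e
  rw [← sub_eq_iff_eq_add, e, hom_shift n pU pV _ _ (fun k => C (((n:ℝ)+1) * jc (n+1) a b k))]
  · unfold JP; rw [Finset.mul_sum]
    refine Finset.sum_congr rfl fun k hk => ?_
    rw [C_mul]; ring
  · congr 1
    have h1 := jc_n n 0 a b ha hb
    have h2 := jc_b n 0 a b ha hb
    push_cast at h1 h2 ⊢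
    have hn : (0:ℝ) ≤ n := n.cast_nonneg
    have hn' : 0 < (n:ℝ) + b + 1 := by linarith
    apply mul_left_cancel₀ hn'.ne'
    linear_combination h1 - (2 * n + a + b + 2) * h2
  · intro k hk
    rw [← C_add]
    congr 1
    have h1 := jc_succ (n+1) k a b ha hb
    have h2 := jc_n n k a b ha hb
    have h3 := jc_b n (k+1) a b ha hb
    have h4 := jc_n n (k+1) a b ha hb
    have h5 := jc_succ n k a b ha hb
    push_cast at h1 h2 h3 h4 h5 ⊢
    have hk' : (0:ℝ) < a + k + 1 := by
      have : (0:ℝ) ≤ k := k.cast_nonneg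
      linarith
    have hk2 : (0:ℝ) < k + 1 := by
      have : (0:ℝ) ≤ k := k.cast_nonneg
      linarith
    have hnk : (k:ℝ) ≤ n := by exact_mod_cast hk
    rcases hk.lt_or_eq with hlt | rfl
    · have hnk' : (k:ℝ) + 1 ≤ n := by exact_mod_cast hlt
      have hd1 : 0 < (n:ℝ) - k := by linarith
      have hd2 : 0 < (n:ℝ) + b - k := by linarith
      have hn' : 0 < (n:ℝ) + b + 1 := by linarith
      have s3 : jc n a (b+1) (k+1) = (n + b + 1) * jc n a b (k+1) / (n + b - k) := by
        rw [eq_div_iff hd2.ne']; linear_combination h3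
      have s4 : jc (n+1) a b (k+1) = (n + a + 1) * (n + b + 1) * jc n a b (k+1) / ((n-k) * (n + b - k)) := by
        rw [eq_div_iff (by positivity)]; linear_combination h4
      have s5 : jc n a b k = - ((k + 1) * (a + k + 1) * jc n a b (k+1)) / ((n-k) * (n + b - k)) := by
        rw [eq_div_iff (by positivity)]; linear_combination h5
      rw [s3, s4, s5]
      field_simp
      ring
    · rw [jc_zero_of_gt k a (b+1) (k+1) (by omega), jc_zero_of_gt k a b (k+1) (by omega)]
      apply mul_left_cancel₀ hk'.ne'
      linear_combination h1 - h2
  · rw [jc_zero_of_gt _ _ _ _ (by omega), jc_zero_of_gt _ _ _ _ (by omega)]; simp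

open Polynomial in
noncomputable def Lf (α β : ℝ) (R : ℝ[X]) : ℝ :=
  ∫ θ in (0:ℝ)..π, Real.sin (θ / 2) ^ (2 * α) * Real.cos (θ / 2) ^ (2 * β) * R.eval (Real.cos θ)

noncomputable def JJ (n : ℕ) (γ η : ℝ) : Polynomial ℝ := JP n (γ - 1/2) (η - 1/2)

lemma cont_sin_rpow (p : ℝ) (hp : 0 ≤ p) : Continuous fun θ : ℝ => Real.sin (θ / 2) ^ p :=
  (Real.continuous_sin.comp (continuous_id.div_const 2)).rpow_const fun _ => Or.inr hp

lemma cont_cos_rpow (p : ℝ) (hp : 0 ≤ p) : Continuous fun θ : ℝ => Real.cos (θ / 2) ^ p :=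
  (Real.continuous_cos.comp (continuous_id.div_const 2)).rpow_const fun _ => Or.inr hp

open Polynomial in
lemma cont_eval_cos (R : ℝ[X]) : Continuous fun θ : ℝ => R.eval (Real.cos θ) :=
  R.continuous.comp Real.continuous_cos

open Polynomial in
lemma Lf_cont (α β : ℝ) (hα : 0 ≤ α) (hβ : 0 ≤ β) (R : ℝ[X]) : Continuous fun θ : ℝ =>
    Real.sin (θ / 2) ^ (2 * α) * Real.cos (θ / 2) ^ (2 * β) * R.eval (Real.cos θ) :=
  ((cont_sin_rpow _ (by linarith)).mul (cont_cos_rpow _ (by linarith))).mul (cont_eval_cos R)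

open Polynomial in
lemma Lf_add (α β : ℝ) (hα : 0 ≤ α) (hβ : 0 ≤ β) (P Q : ℝ[X]) :
    Lf α β (P + Q) = Lf α β P + Lf α β Q := by
  unfold Lf
  rw [← intervalIntegral.integral_add ((Lf_cont α β hα hβ P).intervalIntegrable _ _)
    ((Lf_cont α β hα hβ Q).intervalIntegrable _ _)]
  congr 1; ext θ; rw [eval_add]; ring

open Polynomial in
lemma Lf_C_mul (α β c : ℝ) (P : ℝ[X]) : Lf α β (C c * P) = c * Lf α β P := by
  unfold Lf
  rw [← intervalIntegral.integral_const_mul]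
  congr 1; ext θ; rw [eval_mul, eval_C]; ring

lemma eval_pU_cos (θ : ℝ) : pU.eval (Real.cos θ) = Real.sin (θ / 2) ^ 2 := by
  have h := Real.cos_sq (θ/2)
  have h2 := Real.sin_sq_add_cos_sq (θ/2)
  rw [show 2 * (θ / 2) = θ by ring] at h
  simp only [pU, Polynomial.eval_mul, Polynomial.eval_C, Polynomial.eval_sub, Polynomial.eval_one, Polynomial.eval_X]
  linarith

lemma eval_pV_cos (θ : ℝ) : pV.eval (Real.cos θ) = Real.cos (θ / 2) ^ 2 := by
  have h := Real.cos_sq (θ/2)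
  rw [show 2 * (θ / 2) = θ by ring] at h
  simp only [pV, Polynomial.eval_mul, Polynomial.eval_C, Polynomial.eval_add, Polynomial.eval_one, Polynomial.eval_X]
  linarith

lemma sin_half_nonneg {θ : ℝ} (h : θ ∈ Icc 0 π) : 0 ≤ Real.sin (θ / 2) :=
  Real.sin_nonneg_of_nonneg_of_le_pi (by linarith [h.1]) (by linarith [h.2, Real.pi_pos])
lemma cos_half_nonneg {θ : ℝ} (h : θ ∈ Icc 0 π) : 0 ≤ Real.cos (θ / 2) :=
  Real.cos_nonneg_of_neg_pi_div_two_le_of_le (by linarith [h.1, Real.pi_pos]) (by linarith [h.2, Real.pi_pos])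
lemma sin_half_pos {θ : ℝ} (h : θ ∈ Ioo 0 π) : 0 < Real.sin (θ / 2) :=
  Real.sin_pos_of_pos_of_lt_pi (by linarith [h.1]) (by linarith [h.2, Real.pi_pos])
lemma cos_half_pos {θ : ℝ} (h : θ ∈ Ioo 0 π) : 0 < Real.cos (θ / 2) :=
  Real.cos_pos_of_mem_Ioo ⟨by linarith [h.1, Real.pi_pos], by linarith [h.2, Real.pi_pos]⟩

open Polynomial in
lemma Lf_zero (α β : ℝ) (hα : 0 ≤ α) (hβ : 0 ≤ β) (R : ℝ[X]) :
    Lf α β (C (1/2) * (C (β + 1/2) * pU - C (α + 1/2) * pV) * R + pU * pV * derivative R) = 0 := by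
  have hd : ∀ θ ∈ Ioo 0 π, HasDerivAt
      (fun θ : ℝ => Real.sin (θ / 2) ^ (2 * α + 1) * Real.cos (θ / 2) ^ (2 * β + 1) * R.eval (Real.cos θ))
      ((-2) * (Real.sin (θ / 2) ^ (2 * α) * Real.cos (θ / 2) ^ (2 * β) *
        (C (1/2) * (C (β + 1/2) * pU - C (α + 1/2) * pV) * R + pU * pV * derivative R).eval (Real.cos θ))) θ := by
    intro θ hθ
    have hs := sin_half_pos hθ
    have hc := cos_half_pos hθ
    have h2 : HasDerivAt (fun θ : ℝ => θ / 2) (1/2) θ := (hasDerivAt_id θ).div_const 2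
    have h3 := (h2.sin).rpow_const (p := 2 * α + 1) (Or.inl hs.ne')
    have h4 := (h2.cos).rpow_const (p := 2 * β + 1) (Or.inl hc.ne')
    have h5 : HasDerivAt (fun θ : ℝ => R.eval (Real.cos θ)) ((derivative R).eval (Real.cos θ) * (-Real.sin θ)) θ :=
      (R.hasDerivAt (Real.cos θ)).comp θ (Real.hasDerivAt_cos θ)
    refine ((h3.mul h4).mul h5).congr_deriv ?_
    have hsin : Real.sin θ = 2 * Real.sin (θ / 2) * Real.cos (θ / 2) := by
      rw [← Real.sin_two_mul]; congr 1; ring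
    simp only [eval_add, eval_mul, eval_sub, eval_C, eval_pU_cos, eval_pV_cos, Pi.mul_apply]
    rw [show 2 * α + 1 - 1 = 2 * α by ring, show 2 * β + 1 - 1 = 2 * β by ring,
      Real.rpow_add_one hs.ne', Real.rpow_add_one hc.ne', hsin]
    ring
  have hcont : ContinuousOn (fun θ : ℝ => Real.sin (θ / 2) ^ (2 * α + 1) * Real.cos (θ / 2) ^ (2 * β + 1) *
      R.eval (Real.cos θ)) (Icc 0 π) := (((cont_sin_rpow (2 * α + 1) (by linarith)).mul (cont_cos_rpow (2 * β + 1) (by linarith))).mul (cont_eval_cos R)).continuousOn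
  have hI := intervalIntegral.integral_eq_sub_of_hasDerivAt_of_le Real.pi_pos.le hcont hd
    ((continuous_const.mul (Lf_cont α β hα hβ _)).intervalIntegrable _ _)
  rw [intervalIntegral.integral_const_mul] at hI
  have e0 : (0:ℝ) ^ (2 * α + 1) = 0 := Real.zero_rpow (by linarith)
  have e1 : (0:ℝ) ^ (2 * β + 1) = 0 := Real.zero_rpow (by linarith)
  simp only [Real.cos_pi_div_two, zero_div, Real.sin_zero, e0, e1, mul_zero, zero_mul, sub_zero] at hI
  unfold Lf
  linarith

open Polynomial in
lemma Lf_ibp (α β γ η : ℝ) (hα : 0 ≤ α) (hβ : 0 ≤ β) (hγ : 0 ≤ γ) (hη : 0 ≤ η) (M : ℕ) (q : ℝ[X]) :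
    Lf α β (q * JJ (M+1) γ η) = (2 / ((M:ℝ) + 1)) *
      Lf α β ((pU * pV * derivative q + C (1/2) * (C (γ - α) * pV - C (η - β) * pU) * q) * JJ M (γ+1) (η+1)) := by
  have hz := Lf_zero α β hα hβ (q * JJ M (γ+1) (η+1))
  have hr := JP_rodrigues M (γ - 1/2) (η - 1/2) (by linarith) (by linarith)
  have e : C (1/2) * (C (β + 1/2) * pU - C (α + 1/2) * pV) * (q * JJ M (γ+1) (η+1)) +
      pU * pV * derivative (q * JJ M (γ+1) (η+1)) =
      ((pU * pV * derivative q + C (1/2) * (C (γ - α) * pV - C (η - β) * pU) * q) * JJ M (γ+1) (η+1))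
      + C (-((M:ℝ)+1)/2) * (q * JJ (M+1) γ η) := by
    unfold JJ
    rw [show γ + 1 - 1/2 = γ - 1/2 + 1 by ring, show η + 1 - 1/2 = η - 1/2 + 1 by ring, derivative_mul]
    rw [show β + 1/2 = (η - 1/2 + 1) - (η - β) by ring, show α + 1/2 = (γ - 1/2 + 1) - (γ - α) by ring,
      C_sub (a := η - 1/2 + 1), C_sub (a := γ - 1/2 + 1)]
    linear_combination q * hr
  rw [e, Lf_add _ _ hα hβ, Lf_C_mul] at hz
  have hM : (0:ℝ) < (M:ℝ) + 1 := by positivity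
  field_simp
  linarith

open Polynomial in
lemma JJ_zero (γ η : ℝ) (hγ : 0 ≤ γ) (hη : 0 ≤ η) : ∃ c : ℝ, 0 < c ∧ JJ 0 γ η = C c := by
  refine ⟨jc 0 (γ - 1/2) (η - 1/2) 0, jc_zero_pos _ _ _ (by linarith) (by linarith), ?_⟩
  unfold JJ JP; simp

open Polynomial in
lemma Lf_shift (α β : ℝ) (hα : 0 ≤ α) (hβ : 0 ≤ β) (R : ℝ[X]) :
    Lf α β (pU * pV * R) = Lf (α+1) (β+1) R := by
  unfold Lf
  apply intervalIntegral.integral_congr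
  intro θ hθ
  rw [uIcc_of_le Real.pi_pos.le] at hθ
  simp only [eval_mul, eval_pU_cos, eval_pV_cos]
  have hs := sin_half_nonneg hθ
  have hc := cos_half_nonneg hθ
  rw [show 2 * (α + 1) = 2 * α + (2:ℕ) by push_cast; ring, show 2 * (β + 1) = 2 * β + (2:ℕ) by push_cast; ring,
    Real.rpow_add_of_nonneg hs (by linarith) (by norm_num), Real.rpow_add_of_nonneg hc (by linarith) (by norm_num),
    Real.rpow_natCast, Real.rpow_natCast]
  ring

open Polynomial in
lemma Lf_step_zero (α β γ η : ℝ) (hα : 0 ≤ α) (hβ : 0 ≤ β) (hγ : 0 ≤ γ) (hη : 0 ≤ η) (k : ℕ) :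
    Lf α β (JJ (k+1) α β * JJ 0 γ η) = 0 := by
  obtain ⟨c, -, hc⟩ := JJ_zero γ η hγ hη
  rw [hc, mul_comm, Lf_ibp α β α β hα hβ hα hβ]
  simp [Lf]

open Polynomial in
lemma Lf_step (α β γ η : ℝ) (hα : 0 ≤ α) (hβ : 0 ≤ β) (hγ : 0 ≤ γ) (hη : 0 ≤ η) (k N : ℕ) :
    Lf α β (JJ (k+1) α β * JJ (N+1) γ η) =
      ((N + γ + η + 1) / (k + 1)) * Lf (α+1) (β+1) (JJ k (α+1) (β+1) * JJ N (γ+1) (η+1)) := by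
  rw [mul_comm, Lf_ibp α β α β hα hβ hα hβ]
  have hd := JP_derivative N (γ - 1/2) (η - 1/2) (by linarith) (by linarith)
  have e : (pU * pV * derivative (JJ (N + 1) γ η) +
      C (1 / 2) * (C (α - α) * pV - C (β - β) * pU) * JJ (N + 1) γ η) * JJ k (α + 1) (β + 1) =
      C ((N + γ + η + 1) / 2) * (pU * pV * (JJ k (α+1) (β+1) * JJ N (γ+1) (η+1))) := by
    unfold JJ
    rw [hd, sub_self, sub_self, show γ + 1 - 1/2 = γ - 1/2 + 1 by ring, show η + 1 - 1/2 = η - 1/2 + 1 by ring,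
      show (N:ℝ) + (γ - 1/2) + (η - 1/2) + 2 = N + γ + η + 1 by ring, C_0]
    ring
  rw [e, Lf_C_mul, Lf_shift _ _ hα hβ]
  ring

open Polynomial in
lemma Lf_orth (k : ℕ) : ∀ (N : ℕ) (α β : ℝ), 0 ≤ α → 0 ≤ β → N < k →
    Lf α β (JJ k α β * JJ N α β) = 0 := by
  induction k with
  | zero => intro N α β _ _ h; omega
  | succ k ih =>
    intro N α β hα hβ h
    rcases N with _ | N
    · exact Lf_step_zero α β α β hα hβ hα hβ k
    · rw [Lf_step α β α β hα hβ hα hβ, ih N _ _ (by linarith) (by linarith) (by omega), mul_zero]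

open Polynomial in
lemma Lf_orth' (k N : ℕ) (α β : ℝ) (hα : 0 ≤ α) (hβ : 0 ≤ β) (h : k ≠ N) :
    Lf α β (JJ k α β * JJ N α β) = 0 := by
  rcases lt_or_gt_of_ne h with h | h
  · rw [mul_comm]; exact Lf_orth N k α β hα hβ h
  · exact Lf_orth k N α β hα hβ h

open Polynomial in
lemma Lf_one_pos (α β : ℝ) (hα : 0 ≤ α) (hβ : 0 ≤ β) : 0 < Lf α β 1 := by
  unfold Lf
  apply intervalIntegral.intervalIntegral_pos_of_pos_on ((Lf_cont α β hα hβ _).intervalIntegrable _ _) _ Real.pi_pos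
  intro θ hθ
  have hs := sin_half_pos hθ
  have hc := cos_half_pos hθ
  rw [eval_one]
  positivity

open Polynomial in
lemma Lf_diag_pos (k : ℕ) : ∀ (α β γ η : ℝ), 0 ≤ α → 0 ≤ β → 0 ≤ γ → 0 ≤ η →
    0 < Lf α β (JJ k α β * JJ k γ η) := by
  induction k with
  | zero =>
    intro α β γ η hα hβ hγ hη
    obtain ⟨c, hc, e⟩ := JJ_zero γ η hγ hη
    obtain ⟨c', hc', e'⟩ := JJ_zero α β hα hβ
    rw [e, e', ← C_mul, ← mul_one (C (c' * c)), Lf_C_mul]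
    exact mul_pos (mul_pos hc' hc) (Lf_one_pos α β hα hβ)
  | succ k ih =>
    intro α β γ η hα hβ hγ hη
    rw [Lf_step α β γ η hα hβ hγ hη]
    exact mul_pos (by positivity) (ih _ _ _ _ (by linarith) (by linarith) (by linarith) (by linarith))

open Polynomial in
lemma Lf_moment (α β : ℝ) (hα : 0 ≤ α) (hαβ : α ≤ β) (i : ℕ) : 0 ≤ Lf α β (X ^ i) := by
  have hβ : 0 ≤ β := hα.trans hαβ
  have h1 : Lf α β (X ^ i) = ∫ θ in (0:ℝ)..π, Real.sin (θ / 2) ^ (2 * β) * Real.cos (θ / 2) ^ (2 * α) *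
      (- Real.cos θ) ^ i := by
    unfold Lf
    have := intervalIntegral.integral_comp_sub_left (a := 0) (b := π) (fun θ => Real.sin (θ / 2) ^ (2 * α) * Real.cos (θ / 2) ^ (2 * β) *
      (X ^ i : ℝ[X]).eval (Real.cos θ)) π
    rw [sub_self, sub_zero] at this
    rw [← this]
    congr 1
    ext θ
    rw [show (π - θ) / 2 = π / 2 - θ / 2 by ring, Real.sin_pi_div_two_sub, Real.cos_pi_div_two_sub,
      Real.cos_pi_sub, eval_pow, eval_X]
    ring
  have c2 : Continuous fun θ : ℝ => Real.sin (θ / 2) ^ (2 * β) * Real.cos (θ / 2) ^ (2 * α) *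
      (- Real.cos θ) ^ i :=
    ((cont_sin_rpow _ (by linarith)).mul (cont_cos_rpow _ (by linarith))).mul (by fun_prop)
  have h2 : 0 ≤ Lf α β (X ^ i) + Lf α β (X ^ i) := by
    nth_rewrite 2 [h1]
    unfold Lf
    rw [← intervalIntegral.integral_add ((Lf_cont α β hα hβ _).intervalIntegrable _ _)
      (c2.intervalIntegrable _ _)]
    apply intervalIntegral.integral_nonneg Real.pi_pos.le
    intro θ hθ
    have hs := sin_half_nonneg hθ
    have hc := cos_half_nonneg hθ
    have hcos : Real.cos θ = Real.cos (θ/2) ^ 2 - Real.sin (θ/2) ^ 2 := by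
      rw [← Real.cos_two_mul']; congr 1; ring
    set s := Real.sin (θ/2)
    set c := Real.cos (θ/2)
    rw [eval_pow, eval_X]
    rcases Nat.even_or_odd i with he | ho
    · rw [he.neg_pow]
      have := he.pow_nonneg (Real.cos θ)
      positivity
    · rw [ho.neg_pow]
      have es : s ^ (2 * β) = s ^ (2 * α) * s ^ (2 * (β - α)) := by
        rw [← Real.rpow_add_of_nonneg hs (by linarith) (by linarith)]; congr 1; ring
      have ec : c ^ (2 * β) = c ^ (2 * α) * c ^ (2 * (β - α)) := by
        rw [← Real.rpow_add_of_nonneg hc (by linarith) (by linarith)]; congr 1; ring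
      rw [es, ec, show s ^ (2 * α) * (c ^ (2 * α) * c ^ (2 * (β - α))) * Real.cos θ ^ i +
        s ^ (2 * α) * s ^ (2 * (β - α)) * c ^ (2 * α) * -Real.cos θ ^ i =
        (s ^ (2 * α) * c ^ (2 * α)) * ((c ^ (2 * (β - α)) - s ^ (2 * (β - α))) * Real.cos θ ^ i) by ring]
      apply mul_nonneg (by positivity)
      rcases le_total s c with h | h
      · have : 0 ≤ Real.cos θ := by rw [hcos]; nlinarith
        have h' := Real.rpow_le_rpow hs h (show 0 ≤ 2 * (β - α) by linarith)
        exact mul_nonneg (by linarith) (by positivity)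
      · have : Real.cos θ ≤ 0 := by rw [hcos]; nlinarith
        have h' := Real.rpow_le_rpow hc h (show 0 ≤ 2 * (β - α) by linarith)
        exact mul_nonneg_of_nonpos_of_nonpos (by linarith) (ho.pow_nonpos this)
  linarith

open Polynomial in
lemma Lf_sum (α β : ℝ) (hα : 0 ≤ α) (hβ : 0 ≤ β) (s : Finset ℕ) (f : ℕ → ℝ[X]) :
    Lf α β (∑ i ∈ s, f i) = ∑ i ∈ s, Lf α β (f i) := by
  classical
  induction s using Finset.induction_on with
  | empty => simp [Lf]
  | insert i s hi ih => rw [Finset.sum_insert hi, Finset.sum_insert hi, Lf_add _ _ hα hβ, ih]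

open Polynomial in
lemma Lf_nonneg_coeff (α β : ℝ) (hα : 0 ≤ α) (hαβ : α ≤ β) (q : ℝ[X]) (hq : ∀ i, 0 ≤ q.coeff i) :
    0 ≤ Lf α β q := by
  rw [q.as_sum_range_C_mul_X_pow, Lf_sum _ _ hα (hα.trans hαβ)]
  refine Finset.sum_nonneg fun i _ => ?_
  rw [Lf_C_mul]
  exact mul_nonneg (hq i) (Lf_moment α β hα hαβ i)

open Polynomial in
lemma tilde_form (p r : ℝ) (q : ℝ[X]) :
    pU * pV * derivative q + C (1/2) * (C p * pV - C r * pU) * q =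
      C (1/4) * (derivative q - X * (X * derivative q) + C (p - r) * q + C (p + r) * (X * q)) := by
  unfold pU pV
  have h : (C (1/4) : ℝ[X]) = C (1/2) * C (1/2) := by rw [← C_mul]; norm_num
  rw [h, C_sub, C_add]
  ring

open Polynomial in
lemma tilde_coeff (D : ℕ) (p r : ℝ) (hpr : r ≤ p) (hD : (D:ℝ) ≤ p + r) (q : ℝ[X])
    (hq : ∀ i, 0 ≤ q.coeff i) (hqD : ∀ i, D < i → q.coeff i = 0) :
    (∀ i, 0 ≤ (pU * pV * derivative q + C (1/2) * (C p * pV - C r * pU) * q).coeff i) ∧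
    (∀ i, D + 1 < i → (pU * pV * derivative q + C (1/2) * (C p * pV - C r * pU) * q).coeff i = 0) := by
  rw [tilde_form]
  have e0 : (C (1/4) * (derivative q - X * (X * derivative q) + C (p - r) * q + C (p + r) * (X * q))).coeff 0
      = 1/4 * (q.coeff 1 + (p - r) * q.coeff 0) := by
    simp only [coeff_C_mul, coeff_add, coeff_sub, coeff_X_mul_zero, coeff_derivative]
    norm_num
  have e1 : ∀ j, (C (1/4) * (derivative q - X * (X * derivative q) + C (p - r) * q + C (p + r) * (X * q))).coeff (j+1)
      = 1/4 * ((j + 2) * q.coeff (j+2) + (p - r) * q.coeff (j+1) + (p + r - j) * q.coeff j) := by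
    intro j
    have : (X * derivative q).coeff j = j * q.coeff j := by
      rcases j with _ | j
      · simp
      · rw [coeff_X_mul, coeff_derivative]; push_cast; ring
    simp only [coeff_C_mul, coeff_add, coeff_sub, coeff_X_mul, coeff_derivative, this]
    push_cast
    ring
  constructor
  · intro i
    rcases i with _ | j
    · rw [e0]
      have h1 := hq 1
      have h0 := mul_nonneg (sub_nonneg.2 hpr) (hq 0)
      linarith
    · rw [e1]
      have h1 := mul_nonneg (show (0:ℝ) ≤ j + 2 by positivity) (hq (j+2))
      have h2 := mul_nonneg (sub_nonneg.2 hpr) (hq (j+1))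
      have h3 : 0 ≤ (p + r - j) * q.coeff j := by
        rcases Nat.lt_or_ge D j with h | h
        · rw [hqD j h, mul_zero]
        · have : (j:ℝ) ≤ D := by exact_mod_cast h
          exact mul_nonneg (by linarith) (hq j)
      linarith
  · intro i hi
    rcases i with _ | j
    · omega
    · rw [e1, hqD (j+2) (by omega), hqD (j+1) (by omega), hqD j (by omega)]; ring

open Polynomial in
lemma Lf_posA (α β : ℝ) (hα : 0 ≤ α) (hαβ : α ≤ β) (M : ℕ) : ∀ (D : ℕ) (γ η : ℝ), β ≤ η →
    η - β ≤ γ - α → (D:ℝ) ≤ (γ - α) + (η - β) → ∀ q : ℝ[X], (∀ i, 0 ≤ q.coeff i) →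
    (∀ i, D < i → q.coeff i = 0) → 0 ≤ Lf α β (q * JJ M γ η) := by
  have hβ := hα.trans hαβ
  induction M with
  | zero =>
    intro D γ η h1 h2 h3 q hq hqD
    obtain ⟨c, hc, e⟩ := JJ_zero γ η (by linarith) (by linarith)
    rw [e, mul_comm, Lf_C_mul]
    exact mul_nonneg hc.le (Lf_nonneg_coeff α β hα hαβ q hq)
  | succ M ih =>
    intro D γ η h1 h2 h3 q hq hqD
    rw [Lf_ibp α β γ η hα hβ (by linarith) (by linarith)]
    obtain ⟨t1, t2⟩ := tilde_coeff D (γ - α) (η - β) h2 h3 q hq hqD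
    exact mul_nonneg (by positivity) (ih (D+1) (γ+1) (η+1) (by linarith) (by linarith)
      (by push_cast; linarith) _ t1 t2)

open Polynomial in
lemma Lf_posB (α β γ : ℝ) (hα : 0 ≤ α) (hβ : 0 ≤ β) (hγ : α ≤ γ) (M : ℕ) : ∀ j : ℕ,
    0 ≤ Lf α β (pV ^ j * JJ M (γ + j) (β + j)) := by
  induction M with
  | zero =>
    intro j
    have hj : (0:ℝ) ≤ j := j.cast_nonneg
    obtain ⟨c, hc, e⟩ := JJ_zero (γ + j) (β + j) (by linarith) (by linarith)
    rw [e, mul_comm, Lf_C_mul]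
    refine mul_nonneg hc.le (intervalIntegral.integral_nonneg Real.pi_pos.le fun θ hθ => ?_)
    have hs := sin_half_nonneg hθ
    have hc := cos_half_nonneg hθ
    rw [eval_pow, eval_pV_cos]
    positivity
  | succ M ih =>
    intro j
    have hj : (0:ℝ) ≤ j := j.cast_nonneg
    rw [Lf_ibp α β _ _ hα hβ (by linarith) (by linarith)]
    have e : pU * pV * derivative (pV ^ j) + C (1/2) * (C (γ + j - α) * pV - C (β + j - β) * pU) * pV ^ j =
        C ((γ + j - α) / 2) * pV ^ (j+1) := by
      have e2 : pV * (C (j:ℝ) * pV ^ (j - 1)) = C (j:ℝ) * pV ^ j := by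
        rcases j with _ | k
        · simp
        · simp only [Nat.add_sub_cancel]; ring
      rw [derivative_pow, derivative_pV, show β + j - β = (j:ℝ) by ring,
        show (γ + j - α) / 2 = 1/2 * (γ + j - α) by ring, C_mul (a := (1/2:ℝ))]
      linear_combination (C (1/2) * pU) * e2
    rw [e, mul_assoc, Lf_C_mul, add_assoc, add_assoc]
    have := ih (j+1)
    push_cast at this
    exact mul_nonneg (by positivity) (mul_nonneg (by linarith) this)

def Good (α β γ η : ℝ) : Prop :=
  0 ≤ α ∧ 0 ≤ β ∧ ((α ≤ β ∧ β ≤ η ∧ η - β ≤ γ - α) ∨ (α ≤ γ ∧ η = β))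

lemma Lf_conn (k : ℕ) : ∀ (N : ℕ) (α β γ η : ℝ), Good α β γ η →
    0 ≤ Lf α β (JJ k α β * JJ N γ η) := by
  induction k with
  | zero =>
    rintro N α β γ η ⟨hα, hβ, h⟩
    obtain ⟨c, hc, e⟩ := JJ_zero α β hα hβ
    rw [e, Lf_C_mul]
    refine mul_nonneg hc.le ?_
    rcases h with ⟨h1, h2, h3⟩ | ⟨h1, rfl⟩
    · have := Lf_posA α β hα h1 N 0 γ η h2 h3 (by push_cast; linarith) 1
        (fun i => by rw [Polynomial.coeff_one]; split_ifs <;> norm_num)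
        (fun i hi => by rw [Polynomial.coeff_one, if_neg (by omega)])
      rwa [one_mul] at this
    · have := Lf_posB α η γ hα hβ h1 N 0
      simpa using this
  | succ k ih =>
    rintro N α β γ η ⟨hα, hβ, h⟩
    have hγ : 0 ≤ γ := by rcases h with h | h <;> linarith
    have hη : 0 ≤ η := by rcases h with h | h <;> linarith
    rcases N with _ | N
    · rw [Lf_step_zero α β γ η hα hβ hγ hη]
    · rw [Lf_step α β γ η hα hβ hγ hη]
      refine mul_nonneg (by positivity) (ih N _ _ _ _ ⟨by linarith, by linarith, ?_⟩)
      rcases h with ⟨h1, h2, h3⟩ | ⟨h1, rfl⟩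
      · exact Or.inl ⟨by linarith, by linarith, by linarith⟩
      · exact Or.inr ⟨by linarith, rfl⟩

open scoped InnerProductSpace in
lemma hilbert_pos {E : Type*} [NormedAddCommGroup E] [InnerProductSpace ℝ E] [CompleteSpace E]
    (e : ℕ → E) (f G : E) (k : ℕ) (ho : ∀ i j, i ≠ j → ⟪e i, e j⟫_ℝ = 0) (hne : ∀ i, e i ≠ 0)
    (hf : f ∈ closure (Submodule.span ℝ (Set.range e) : Set E))
    (h1 : ∀ i, 0 < ⟪f, e i⟫_ℝ) (h2 : ∀ i, 0 ≤ ⟪e i, G⟫_ℝ) (h3 : 0 < ⟪e k, G⟫_ℝ) : 0 < ⟪f, G⟫_ℝ := by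
  set v : ℕ → E := fun i => ‖e i‖⁻¹ • e i with hv
  have hpos : ∀ i, 0 < ‖e i‖⁻¹ := fun i => inv_pos.2 (norm_pos_iff.2 (hne i))
  have hvo : Orthonormal ℝ v := by
    refine ⟨fun i => ?_, fun i j hij => ?_⟩
    · rw [hv]; simp only [norm_smul, norm_inv, norm_norm]
      exact inv_mul_cancel₀ (norm_pos_iff.2 (hne i)).ne'
    · simp only [hv, inner_smul_left, inner_smul_right, ho i j hij, mul_zero]
  obtain ⟨w, b, hw, hb⟩ := hvo.toSubtypeRange.exists_hilbertBasis_extension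
  have hs := b.hasSum_inner_mul_inner f G
  have hmem : ∀ i, v i ∈ w := fun i => hw ⟨i, rfl⟩
  have hnn : ∀ i : w, 0 ≤ ⟪f, b i⟫_ℝ * ⟪b i, G⟫_ℝ := by
    intro i
    by_cases hi : ∃ N, v N = b i
    · obtain ⟨N, hN⟩ := hi
      rw [← hN]
      simp only [hv, inner_smul_left, inner_smul_right]
      exact mul_nonneg (mul_nonneg (hpos N).le (h1 N).le) (mul_nonneg (by simp) (h2 N))
    · push Not at hi
      have hz : ⟪f, b i⟫_ℝ = 0 := by
        have hcl : IsClosed {x : E | ⟪x, b i⟫_ℝ = 0} :=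
          isClosed_eq (continuous_id.inner continuous_const) continuous_const
        refine closure_minimal (fun x hx => ?_) hcl hf
        refine Submodule.span_induction (p := fun x _ => ⟪x, b i⟫_ℝ = 0) ?_ ?_ ?_ ?_ hx
        · rintro _ ⟨N, rfl⟩
          have h4 : b ⟨v N, hmem N⟩ = v N := by rw [hb]
          have h5 : ⟪b ⟨v N, hmem N⟩, b i⟫_ℝ = 0 := b.orthonormal.2 (fun h => hi N (by rw [← h, h4]))
          rw [h4] at h5
          simp only [hv, inner_smul_left] at h5
          rcases mul_eq_zero.1 h5 with h | h
          · exact absurd h (by simpa using hne N)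
          · exact h
        · simp
        · intro x y _ _ hx hy; rw [inner_add_left, hx, hy, add_zero]
        · intro a x _ hx; rw [inner_smul_left, hx, mul_zero]
      rw [hz, zero_mul]
  have h6 := le_hasSum hs ⟨v k, hmem k⟩ (fun j _ => hnn j)
  refine lt_of_lt_of_le ?_ h6
  have h4 : b ⟨v k, hmem k⟩ = v k := by rw [hb]
  rw [h4]
  simp only [hv, inner_smul_left, inner_smul_right]
  have := hpos k
  have := h1 k
  simp only [conj_trivial]
  positivity

open Polynomial in
lemma JP_degree (n : ℕ) : ∀ (a b : ℝ), -1 < a → -1 < b → a + b > -2 → (JP n a b).degree = n := by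
  induction n with
  | zero =>
    intro a b ha hb hab
    have : JP 0 a b = C (jc 0 a b 0) := by simp [JP]
    rw [this, degree_C (jc_zero_pos 0 a b ha hb).ne']; rfl
  | succ n ih =>
    intro a b ha hb hab
    have h := JP_derivative n a b ha hb
    have hn : (0:ℝ) ≤ n := n.cast_nonneg
    have hd : (derivative (JP (n+1) a b)).degree = n := by
      rw [h, degree_C_mul (ne_of_gt (by linarith)), ih _ _ (by linarith) (by linarith) (by linarith)]
    have h0 : (JP (n+1) a b).natDegree ≠ 0 := by
      intro h0
      rw [natDegree_eq_zero] at h0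
      obtain ⟨x, hx⟩ := h0
      rw [← hx] at hd
      simp at hd
    have h1 := natDegree_derivative (JP (n+1) a b)
    rw [natDegree_eq_of_degree_eq_some hd] at h1
    rw [degree_eq_natDegree (fun h => h0 (by rw [h, natDegree_zero]))]
    norm_cast
    omega

open Polynomial in
lemma JJ_span (γ η : ℝ) (hγ : 0 ≤ γ) (hη : 0 ≤ η) :
    Submodule.span ℝ (Set.range fun n => JJ n γ η) = ⊤ := by
  let S : Polynomial.Sequence ℝ := ⟨fun n => JJ n γ η, fun n => JP_degree n _ _ (by linarith) (by linarith) (by linarith)⟩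
  exact S.span (fun i => (leadingCoeff_ne_zero.2 (S.ne_zero i)).isUnit)

noncomputable abbrev mu0 : Measure ℝ := volume.restrict (Ioc 0 π)

noncomputable abbrev EE := Lp ℝ 2 mu0

lemma memE (g : ℝ → ℝ) (hg : Continuous g) : MemLp g 2 mu0 := by
  obtain ⟨C, hC⟩ := (isCompact_Icc (a := (0:ℝ)) (b := π)).exists_bound_of_continuousOn hg.continuousOn
  refine MemLp.of_bound hg.aestronglyMeasurable C ?_
  refine (ae_restrict_iff' measurableSet_Ioc).2 (Filter.Eventually.of_forall fun x hx => hC x ⟨hx.1.le, hx.2⟩)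

open scoped InnerProductSpace in
lemma inner_E (g h : ℝ → ℝ) (hg : Continuous g) (hh : Continuous h) :
    ⟪(memE g hg).toLp g, (memE h hh).toLp h⟫_ℝ = ∫ θ in (0:ℝ)..π, g θ * h θ := by
  rw [L2.inner_def, intervalIntegral.integral_of_le Real.pi_pos.le]
  refine integral_congr_ae ?_
  filter_upwards [(memE g hg).coeFn_toLp, (memE h hh).coeFn_toLp] with x h1 h2
  rw [h1, h2]; simp [mul_comm]

open Polynomial in
noncomputable def LamE (W : ℝ → ℝ) (hW : Continuous W) : ℝ[X] →ₗ[ℝ] EE where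
  toFun P := (memE (fun θ => W θ * P.eval (Real.cos θ)) (hW.mul (cont_eval_cos P))).toLp _
  map_add' P Q := by
    rw [← MemLp.toLp_add]
    congr 1; ext θ; simp [mul_add]
  map_smul' c P := by
    rw [RingHom.id_apply, ← MemLp.toLp_const_smul]
    congr 1; ext θ; simp; ring

open Polynomial in
lemma dense_E (W : ℝ → ℝ) (hW : Continuous W) (g : ℝ → ℝ) (hg : Continuous g) (γ η : ℝ) (hγ : 0 ≤ γ)
    (hη : 0 ≤ η) : (memE (fun θ => W θ * g θ) (hW.mul hg)).toLp _ ∈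
      closure (Submodule.span ℝ (Set.range fun n => LamE W hW (JJ n γ η)) : Set EE) := by
  have hsp : ∀ P, LamE W hW P ∈ Submodule.span ℝ (Set.range fun n => LamE W hW (JJ n γ η)) := by
    intro P
    have h1 : P ∈ Submodule.span ℝ (Set.range fun n => JJ n γ η) := by rw [JJ_span γ η hγ hη]; trivial
    have h2 := Submodule.mem_map_of_mem (f := LamE W hW) h1
    rw [Submodule.map_span, ← Set.range_comp] at h2
    exact h2
  obtain ⟨C, hC⟩ := (isCompact_Icc (a := (0:ℝ)) (b := π)).exists_bound_of_continuousOn hW.continuousOn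
  have hC0 : 0 ≤ C := (norm_nonneg _).trans (hC 0 ⟨le_rfl, Real.pi_pos.le⟩)
  set K : ℝ := (measureUnivNNReal mu0 : ℝ) ^ ((2:ENNReal).toReal⁻¹) with hK
  have hK0 : 0 ≤ K := by positivity
  rw [Metric.mem_closure_iff]
  intro ε hε
  have hD : 0 < K * (C + 1) + 1 := by positivity
  obtain ⟨P, hP⟩ := exists_polynomial_near_of_continuousOn (-1) 1 (fun x => g (Real.arccos x))
    (hg.comp Real.continuous_arccos).continuousOn (ε / (K * (C + 1) + 1)) (by positivity)
  refine ⟨_, hsp P, ?_⟩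
  rw [dist_eq_norm, LamE]
  simp only [LinearMap.coe_mk, AddHom.coe_mk]
  rw [← MemLp.toLp_sub]
  refine lt_of_le_of_lt (Lp.norm_le_of_ae_bound (C := C * (ε / (K * (C + 1) + 1))) (by positivity) ?_) ?_
  · filter_upwards [MemLp.coeFn_toLp ((memE (fun θ => W θ * g θ) (hW.mul hg)).sub (memE (fun θ => W θ * P.eval (Real.cos θ)) (hW.mul (cont_eval_cos P)))), ae_restrict_mem measurableSet_Ioc] with x h1 hx
    rw [h1]
    have h3 := hP (Real.cos x) ⟨Real.neg_one_le_cos x, Real.cos_le_one x⟩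
    rw [Real.arccos_cos hx.1.le hx.2] at h3
    have h4 := hC x ⟨hx.1.le, hx.2⟩
    simp only [Pi.sub_apply]
    rw [← mul_sub, norm_mul]
    rw [abs_sub_comm] at h3
    exact mul_le_mul h4 h3.le (norm_nonneg _) hC0
  · rw [← hK, ← mul_assoc, mul_div_assoc', div_lt_iff₀ hD]
    nlinarith

lemma cont_ker (δ t : ℝ) (hδ : 0 ≤ δ) : Continuous fun θ : ℝ => (max (t - θ) 0) ^ δ :=
  ((continuous_const.sub continuous_id).max continuous_const).rpow_const fun _ => Or.inr hδ

lemma FJ_eq (n : ℕ) (α β δ t : ℝ) (hα : 0 ≤ α) (hβ : 0 ≤ β) (hδ : 0 < δ) (ht : t ∈ Ioc 0 π) :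
    FJ n α β δ t = ∫ θ in (0:ℝ)..π, (max (t - θ) 0) ^ δ * (Real.sin (θ / 2) ^ (2 * α) *
      Real.cos (θ / 2) ^ (2 * β) * (JJ n α β).eval (Real.cos θ)) := by
  have hc : Continuous fun θ : ℝ => (max (t - θ) 0) ^ δ * (Real.sin (θ / 2) ^ (2 * α) *
      Real.cos (θ / 2) ^ (2 * β) * (JJ n α β).eval (Real.cos θ)) :=
    (cont_ker δ t hδ.le).mul (Lf_cont α β hα hβ (JJ n α β))
  rw [← intervalIntegral.integral_add_adjacent_intervals (b := t) (hc.intervalIntegrable _ _)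
    (hc.intervalIntegrable _ _)]
  have h2 : ∫ θ in t..π, (max (t - θ) 0) ^ δ * (Real.sin (θ / 2) ^ (2 * α) *
      Real.cos (θ / 2) ^ (2 * β) * (JJ n α β).eval (Real.cos θ)) = 0 := by
    rw [intervalIntegral.integral_congr (g := fun _ => 0)]
    · simp
    · intro θ hθ
      rw [uIcc_of_le ht.2] at hθ
      simp only
      rw [max_eq_right (by linarith [hθ.1]), Real.zero_rpow hδ.ne', zero_mul]
  rw [h2, add_zero, FJ]
  refine intervalIntegral.integral_congr fun θ hθ => ?_
  rw [uIcc_of_le ht.1.le] at hθ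
  simp only [JJ, JP_eval]
  rw [max_eq_left (by linarith [hθ.2])]
  ring

lemma FJ_step (α β γ η δ t : ℝ) (hG : Good α β γ η) (h2α : γ ≤ 2 * α) (h2β : η ≤ 2 * β) (hδ : 0 < δ)
    (ht : t ∈ Ioc 0 π) (h : ∀ n, 0 < FJ n γ η δ t) (k : ℕ) : 0 < FJ k α β δ t := by
  obtain ⟨hα, hβ, h'⟩ := hG
  have hγ : 0 ≤ γ := by rcases h' with h | h <;> linarith
  have hη : 0 ≤ η := by rcases h' with h | h <;> linarith
  have hW : Continuous fun θ : ℝ => Real.sin (θ / 2) ^ γ * Real.cos (θ / 2) ^ η :=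
    (cont_sin_rpow _ hγ).mul (cont_cos_rpow _ hη)
  have hg := cont_ker δ t hδ.le
  have hG' : Continuous fun θ : ℝ => Real.sin (θ / 2) ^ (2 * α - γ) * Real.cos (θ / 2) ^ (2 * β - η) *
      (JJ k α β).eval (Real.cos θ) :=
    ((cont_sin_rpow _ (by linarith)).mul (cont_cos_rpow _ (by linarith))).mul (cont_eval_cos _)
  have hsq : ∀ x p : ℝ, 0 ≤ x → 0 ≤ p → x ^ p * x ^ p = x ^ (2 * p) := fun x p hx hp => by
    rw [← Real.rpow_add_of_nonneg hx hp hp, two_mul]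
  have hmx : ∀ x p q : ℝ, 0 ≤ x → 0 ≤ p → p ≤ q → x ^ p * x ^ (q - p) = x ^ q := fun x p q hx hp hq => by
    rw [← Real.rpow_add_of_nonneg hx hp (by linarith)]; congr 1; ring
  have hee : ∀ i j, inner ℝ (LamE _ hW (JJ i γ η)) (LamE _ hW (JJ j γ η)) = Lf γ η (JJ i γ η * JJ j γ η) := by
    intro i j
    refine (inner_E _ _ (hW.mul (cont_eval_cos _)) (hW.mul (cont_eval_cos _))).trans ?_
    refine intervalIntegral.integral_congr fun θ hθ => ?_
    rw [uIcc_of_le Real.pi_pos.le] at hθ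
    simp only [Polynomial.eval_mul, Pi.mul_apply]
    rw [← hsq _ _ (sin_half_nonneg hθ) hγ, ← hsq _ _ (cos_half_nonneg hθ) hη]
    ring
  have heG : ∀ i, inner ℝ (LamE _ hW (JJ i γ η)) ((memE _ hG').toLp _) = Lf α β (JJ k α β * JJ i γ η) := by
    intro i
    refine (inner_E _ _ (hW.mul (cont_eval_cos _)) hG').trans ?_
    refine intervalIntegral.integral_congr fun θ hθ => ?_
    rw [uIcc_of_le Real.pi_pos.le] at hθ
    simp only [Polynomial.eval_mul, Pi.mul_apply]
    rw [← hmx _ _ _ (sin_half_nonneg hθ) hγ h2α, ← hmx _ _ _ (cos_half_nonneg hθ) hη h2β]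
    ring
  have key := hilbert_pos (fun n => LamE _ hW (JJ n γ η)) _ ((memE _ hG').toLp _) k
    (fun i j hij => by rw [hee, Lf_orth' _ _ _ _ hγ hη hij])
    (fun i h0 => by
      have h1 := hee i i
      rw [h0, inner_zero_left] at h1
      exact (Lf_diag_pos i γ η γ η hγ hη hγ hη).ne h1)
    (dense_E _ hW _ hg γ η hγ hη) ?_
    (fun i => by rw [heG]; exact Lf_conn _ _ _ _ _ _ ⟨hα, hβ, h'⟩)
    (by rw [heG]; exact Lf_diag_pos _ _ _ _ _ hα hβ hγ hη)
  · rw [inner_E _ _ (by exact hW.mul hg) hG'] at key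
    rw [FJ_eq k α β δ t hα hβ hδ ht]
    refine key.trans_eq (intervalIntegral.integral_congr fun θ hθ => ?_)
    rw [uIcc_of_le Real.pi_pos.le] at hθ
    rw [← hmx _ _ _ (sin_half_nonneg hθ) hγ h2α, ← hmx _ _ _ (cos_half_nonneg hθ) hη h2β]
    ring
  · intro i
    have h1 := h i
    rw [FJ_eq i γ η δ t hγ hη hδ ht] at h1
    refine h1.trans_eq (Eq.trans ?_ (inner_E _ _ (hW.mul hg) (hW.mul (cont_eval_cos _))).symm)
    refine intervalIntegral.integral_congr fun θ hθ => ?_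
    rw [uIcc_of_le Real.pi_pos.le] at hθ
    simp only [Pi.mul_apply]
    rw [← hsq _ _ (sin_half_nonneg hθ) hγ, ← hsq _ _ (cos_half_nonneg hθ) hη]
    ring

lemma FJ_raise (α β δ t : ℝ) (hα : 0 ≤ α) (hβ : 0 ≤ β) (hδ : 0 < δ) (ht : t ∈ Ioc 0 π)
    (h : ∀ n, 0 < FJ n α β δ t) (n : ℕ) : 0 < FJ n α (β + 1) δ t := by
  have h0 := h n
  have h1 := h (n+1)
  have hn : (0:ℝ) ≤ n := n.cast_nonneg
  have hp : 0 < 2 * (n:ℝ) + (α - 1/2) + (β - 1/2) + 2 := by linarith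
  have e : (2 * (n:ℝ) + (α - 1/2) + (β - 1/2) + 2) * FJ n α (β + 1) δ t =
      (n + 1) * FJ (n+1) α β δ t + (n + (β - 1/2) + 1) * FJ n α β δ t := by
    rw [FJ_eq n α β δ t hα hβ hδ ht, FJ_eq (n+1) α β δ t hα hβ hδ ht, FJ_eq n α (β+1) δ t hα (by linarith) hδ ht]
    rw [← intervalIntegral.integral_const_mul, ← intervalIntegral.integral_const_mul,
      ← intervalIntegral.integral_const_mul, ← intervalIntegral.integral_add]
    · refine intervalIntegral.integral_congr fun θ hθ => ?_
      rw [uIcc_of_le Real.pi_pos.le] at hθ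
      have hr := congrArg (fun P => Polynomial.eval (Real.cos θ) P) (JP_raise n (α - 1/2) (β - 1/2) (by linarith) (by linarith))
      simp only [Polynomial.eval_mul, Polynomial.eval_add, Polynomial.eval_C, eval_pV_cos] at hr
      simp only [JJ]
      have hc := cos_half_nonneg hθ
      rw [show 2 * (β + 1) = 2 * β + (2:ℕ) by push_cast; ring, Real.rpow_add_of_nonneg hc (by linarith) (by norm_num), Real.rpow_natCast,
        show β + 1 - 1/2 = β - 1/2 + 1 by ring]
      linear_combination (max (t - θ) 0) ^ δ * Real.sin (θ / 2) ^ (2 * α) * Real.cos (θ / 2) ^ (2 * β) * hr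
    · exact (continuous_const.mul ((cont_ker δ t hδ.le).mul (Lf_cont α β hα hβ _))).intervalIntegrable _ _
    · exact (continuous_const.mul ((cont_ker δ t hδ.le).mul (Lf_cont α β hα hβ _))).intervalIntegrable _ _
  have : 0 < (n + 1) * FJ (n+1) α β δ t + (n + (β - 1/2) + 1) * FJ n α β δ t :=
    add_pos (mul_pos (by linarith) h1) (mul_pos (by linarith) h0)
  rw [← e] at this
  exact (mul_pos_iff_of_pos_left hp).1 this

open Polynomial in
noncomputable def TT (R : ℝ[X]) : ℝ[X] := 4 * pU * pV * derivative (derivative R) - (pV - pU) * derivative R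

open Polynomial in
lemma TT_add (P Q : ℝ[X]) : TT (P + Q) = TT P + TT Q := by
  simp only [TT, derivative_add]; ring

open Polynomial in
lemma TT_C_mul (c : ℝ) (P : ℝ[X]) : TT (C c * P) = C c * TT P := by
  simp only [TT, derivative_C_mul]; ring

open Polynomial in
lemma TT_sum (s : Finset ℕ) (f : ℕ → ℝ[X]) : TT (∑ i ∈ s, f i) = ∑ i ∈ s, TT (f i) := by
  induction s using Finset.induction_on with
  | empty => simp [TT]
  | insert a s h ih => rw [Finset.sum_insert h, Finset.sum_insert h, TT_add, ih]

open Polynomial in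
lemma TT_mono (p q : ℕ) : TT (pU ^ p * pV ^ q) + C (((p:ℝ) + q) ^ 2) * (pU ^ p * pV ^ q) =
    C ((p:ℝ) * (p - 1/2)) * (pU ^ (p - 1) * pV ^ q) + C ((q:ℝ) * (q - 1/2)) * (pU ^ p * pV ^ (q - 1)) := by
  apply Polynomial.funext
  intro x
  have huv : pU.eval x + pV.eval x = 1 := by rw [← eval_add, pU_add_pV, eval_one]
  unfold TT
  rcases p with _ | _ | p <;> rcases q with _ | _ | q <;>
    simp only [derivative_mul, derivative_pow, derivative_add, derivative_C, derivative_pU, derivative_pV, pow_zero, derivative_one, mul_zero, zero_mul,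
      Nat.cast_zero, Nat.add_sub_cancel, zero_add, Nat.cast_one, one_mul, mul_one, derivative_zero, add_zero, pow_one,
      Nat.cast_add, C_add, C_1, C_0, sub_zero, derivative_natCast, map_natCast,
      eval_add, eval_mul, eval_sub, eval_pow, eval_C, eval_natCast, eval_one, eval_zero, eval_ofNat, zero_sub, eval_neg, Nat.sub_self, Nat.zero_sub] <;>
    generalize pU.eval x = u at * <;> generalize pV.eval x = v at *
  · ring
  · linear_combination (1/2) * huv
  · linear_combination ((q+2:ℝ) * (q+2-1/2) * v ^ (q+1)) * huv
  · linear_combination (1/2) * huv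
  · linear_combination ((1/2) * v + (1/2) * u) * huv
  · linear_combination ((1/2) * v ^ (q+2) + (q+2:ℝ) * (q+2-1/2) * u * v ^ (q+1)) * huv
  · linear_combination ((p+2:ℝ) * (p+2-1/2) * u ^ (p+1)) * huv
  · linear_combination ((1/2) * u ^ (p+2) + (p+2:ℝ) * (p+2-1/2) * v * u ^ (p+1)) * huv
  · linear_combination ((p+2:ℝ) * (p+2-1/2) * u ^ (p+1) * v ^ (q+2) + (q+2:ℝ) * (q+2-1/2) * u ^ (p+2) * v ^ (q+1)) * huv

open Polynomial in
noncomputable def QQ (n m : ℕ) : ℝ[X] := pU ^ m * JP n ((m:ℝ) - 1/2) (-1/2)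

open Polynomial in
lemma QQ_eq (n m : ℕ) : QQ n m = ∑ k ∈ Finset.range (n+1), C (jc n ((m:ℝ) - 1/2) (-1/2) k) * (pU ^ (k+m) * pV ^ (n-k)) := by
  rw [QQ, JP, Finset.mul_sum]
  refine Finset.sum_congr rfl fun k _ => ?_
  ring

open Polynomial in
lemma QQ_TT (n m : ℕ) : TT (QQ n m) + C (((n:ℝ) + m) ^ 2) * QQ n m =
    ∑ k ∈ Finset.range (n+1), C (jc n ((m:ℝ) - 1/2) (-1/2) k) *
      (C (((k:ℝ) + m) * (k + m - 1/2)) * (pU ^ (k + m - 1) * pV ^ (n-k)) +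
       C (((n:ℝ) - k) * (n - k - 1/2)) * (pU ^ (k + m) * pV ^ (n-k-1))) := by
  rw [QQ_eq, TT_sum, Finset.mul_sum, ← Finset.sum_add_distrib]
  refine Finset.sum_congr rfl fun k hk => ?_
  have hk' : k ≤ n := Nat.lt_succ_iff.1 (Finset.mem_range.1 hk)
  have h := TT_mono (k+m) (n-k)
  rw [Nat.cast_sub hk'] at h
  push_cast at h
  rw [show (k:ℝ) + m + (n - k) = n + m by ring] at h
  rw [TT_C_mul, ← h]
  ring

open Polynomial in
lemma QQ_zero (n : ℕ) : TT (QQ n 0) + C ((n:ℝ) ^ 2) * QQ n 0 = 0 := by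
  have h := QQ_TT n 0
  simp only [Nat.cast_zero, add_zero] at h
  rw [h]
  simp only [mul_add]
  rw [Finset.sum_add_distrib, Finset.sum_range_succ', Finset.sum_range_succ (n := n)]
  simp only [Nat.cast_zero, zero_mul, C_0, mul_zero, add_zero, sub_self]
  rw [← Finset.sum_add_distrib]
  refine Finset.sum_eq_zero fun k hk => ?_
  have hj := jc_succ n k (0 - 1/2) (-1/2) (by norm_num) (by norm_num)
  have hc : jc n (0 - 1/2) (-1/2) (k+1) * ((((k+1:ℕ):ℝ)) * (((k+1:ℕ):ℝ) - 1/2)) +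
     jc n (0 - 1/2) (-1/2) k * (((n:ℝ) - k) * (n - k - 1/2)) = 0 := by
    push_cast; linear_combination hj
  have hC := congrArg C hc
  simp only [C_add, C_mul (a := jc _ _ _ _), C_0] at hC
  rw [Nat.add_sub_cancel, Nat.sub_sub]
  linear_combination (pU ^ k * pV ^ (n - (k+1))) * hC

open Polynomial in
lemma QQ_succ (n m : ℕ) : TT (QQ n (m+1)) + C (((n:ℝ) + m + 1) ^ 2) * QQ n (m+1) =
    C (((m:ℝ) + 1) * (n + m + 1/2)) * QQ n m := by
  have h := QQ_TT n (m+1)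
  have hm : (0:ℝ) ≤ m := m.cast_nonneg
  rw [show (n:ℝ) + m + 1 = n + ((m+1:ℕ):ℝ) by push_cast; ring, h]
  obtain ⟨D, hD⟩ : ∃ D, D = ((m:ℝ) + 1) * (n + m + 1/2) := ⟨_, rfl⟩
  rw [← hD]
  simp only [mul_add]
  rw [Finset.sum_add_distrib, Finset.sum_range_succ', Finset.sum_range_succ (n := n), QQ_eq, Finset.sum_range_succ' (n := n), mul_add]
  simp only [sub_self, zero_mul, C_0, mul_zero, add_zero]
  rw [add_right_comm, ← Finset.sum_add_distrib, Finset.mul_sum]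
  have ha : ∀ k, ((n:ℝ) + m + 1/2) * jc n ((m:ℝ) - 1/2) (-1/2) k = (m + k + 1/2) * jc n (((m+1:ℕ):ℝ) - 1/2) (-1/2) k := by
    intro k
    have h2 := jc_a n k ((m:ℝ) - 1/2) (-1/2) (by linarith) (by norm_num)
    rw [show (m:ℝ) - 1/2 + 1 = ((m+1:ℕ):ℝ) - 1/2 by push_cast; ring] at h2
    linear_combination h2
  congr 1
  · refine Finset.sum_congr rfl fun k hk => ?_
    have hj := jc_succ n k (((m+1:ℕ):ℝ) - 1/2) (-1/2) (by push_cast; linarith) (by norm_num)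
    have hc : jc n (((m+1:ℕ):ℝ) - 1/2) (-1/2) (k+1) * ((((k+1:ℕ):ℝ) + ((m+1:ℕ):ℝ)) * (((k+1:ℕ):ℝ) + ((m+1:ℕ):ℝ) - 1/2)) +
       jc n (((m+1:ℕ):ℝ) - 1/2) (-1/2) k * (((n:ℝ) - k) * (n - k - 1/2)) =
        D * jc n ((m:ℝ) - 1/2) (-1/2) (k+1) := by
      have h3 := ha (k+1)
      rw [hD]
      push_cast at *
      linear_combination hj - (m+1) * h3
    have hC := congrArg C hc
    simp only [C_add, C_mul (a := jc _ _ _ _), C_mul (b := jc _ _ _ _)] at hC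
    rw [show k + 1 + (m + 1) - 1 = k + 1 + m by omega, show k + (m + 1) = k + 1 + m by omega, Nat.sub_sub]
    linear_combination (pU ^ (k+1+m) * pV ^ (n - (k+1))) * hC
  · have h3 := ha 0
    have hc : jc n (((m+1:ℕ):ℝ) - 1/2) (-1/2) 0 * ((((0:ℕ):ℝ) + ((m+1:ℕ):ℝ)) * (((0:ℕ):ℝ) + ((m+1:ℕ):ℝ) - 1/2)) =
        D * jc n ((m:ℝ) - 1/2) (-1/2) 0 := by
      rw [hD]
      push_cast at *
      linear_combination - (m+1) * h3
    have hC := congrArg C hc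
    simp only [C_mul (a := jc _ _ _ _), C_mul (b := jc _ _ _ _)] at hC
    rw [show 0 + (m + 1) - 1 = 0 + m by omega]
    linear_combination (pU ^ (0+m) * pV ^ (n - 0)) * hC

noncomputable def Jint (φ : ℝ → ℝ) : ℝ → ℝ := fun t => ∫ s in (0:ℝ)..t, φ s

lemma Jint_deriv (φ : ℝ → ℝ) (h : Continuous φ) (t : ℝ) : HasDerivAt (Jint φ) (φ t) t :=
  intervalIntegral.integral_hasDerivAt_right (h.intervalIntegrable _ _)
    (h.stronglyMeasurableAtFilter _ _) h.continuousAt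

lemma Jint_cont (φ : ℝ → ℝ) (h : Continuous φ) : Continuous (Jint φ) :=
  continuous_iff_continuousAt.2 fun t => (Jint_deriv φ h t).continuousAt

lemma Jint_zero (φ : ℝ → ℝ) : Jint φ 0 = 0 := by simp [Jint]

lemma JI_cont (k : ℕ) (φ : ℝ → ℝ) (h : Continuous φ) : Continuous (Jint^[k] φ) := by
  induction k with
  | zero => exact h
  | succ k ih => rw [Function.iterate_succ_apply']; exact Jint_cont _ ih

lemma JI_lin (k : ℕ) (a b : ℝ) (φ ψ : ℝ → ℝ) (h : Continuous φ) (h' : Continuous ψ) :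
    Jint^[k] (fun x => a * φ x + b * ψ x) = fun x => a * Jint^[k] φ x + b * Jint^[k] ψ x := by
  induction k with
  | zero => rfl
  | succ k ih =>
    rw [Function.iterate_succ_apply', Function.iterate_succ_apply', Function.iterate_succ_apply', ih]
    ext t
    simp only [Jint]
    rw [intervalIntegral.integral_add, intervalIntegral.integral_const_mul, intervalIntegral.integral_const_mul]
    · exact (continuous_const.mul (JI_cont k φ h)).intervalIntegrable _ _
    · exact (continuous_const.mul (JI_cont k ψ h')).intervalIntegrable _ _

lemma Jint_of_deriv (φ ψ : ℝ → ℝ) (h : ∀ t, HasDerivAt φ (ψ t) t) (hc : Continuous ψ) (t : ℝ) :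
    Jint ψ t = φ t - φ 0 :=
  intervalIntegral.integral_eq_sub_of_hasDerivAt (fun x _ => h x) (hc.intervalIntegrable _ _)

lemma rpow_int (p t : ℝ) (hp : -1 < p) (g : ℝ → ℝ) (hg : Continuous g) :
    IntervalIntegrable (fun θ => (t - θ) ^ p * g θ) volume 0 t := by
  refine IntervalIntegrable.mul_continuousOn ?_ hg.continuousOn
  have := (intervalIntegral.intervalIntegrable_rpow' (a := 0) (b := t) hp).comp_sub_left t
  simpa using this.symm

lemma rpow_J (p t : ℝ) (hp : -1 < p) (ht : 0 < t) (φ : ℝ → ℝ) (hφ : Continuous φ) :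
    ∫ θ in (0:ℝ)..t, (t - θ) ^ (p + 1) * φ θ = (p + 1) * ∫ θ in (0:ℝ)..t, (t - θ) ^ p * Jint φ θ := by
  have h1 : Continuous fun θ : ℝ => (t - θ) ^ (p + 1) :=
    (continuous_const.sub continuous_id).rpow_const fun _ => Or.inr (by linarith)
  have h := intervalIntegral.integral_mul_deriv_eq_deriv_mul_of_hasDeriv_right (a := 0) (b := t)
    (u := fun θ : ℝ => (t - θ) ^ (p + 1)) (v := Jint φ) (u' := fun θ => -((p + 1) * (t - θ) ^ p)) (v' := φ)
    h1.continuousOn (Jint_cont φ hφ).continuousOn ?_ (fun x _ => (Jint_deriv φ hφ x).hasDerivWithinAt)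
    ?_ (hφ.intervalIntegrable _ _)
  · rw [h, sub_self, Real.zero_rpow (by linarith), Jint_zero, ← intervalIntegral.integral_const_mul]
    simp only [zero_mul, mul_zero, sub_zero, zero_sub]
    rw [← intervalIntegral.integral_neg]
    congr 1; ext θ; ring
  · intro x hx
    rw [min_eq_left ht.le, max_eq_right ht.le] at hx
    have h2 : HasDerivAt (fun θ : ℝ => t - θ) (-1) x := (hasDerivAt_id x).const_sub t
    have h3 := h2.rpow_const (p := p + 1) (Or.inl (by linarith [hx.2] : 0 < t - x).ne')
    refine (h3.congr_deriv ?_).hasDerivWithinAt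
    rw [add_sub_cancel_right]; ring
  · have := (rpow_int p t hp (fun _ => -(p+1)) continuous_const)
    refine this.congr ?_
    intro x _; ring

lemma rpow_JI (k : ℕ) (p t : ℝ) (hp : -1 < p) (ht : 0 < t) : ∃ c : ℝ, 0 < c ∧ ∀ (φ : ℝ → ℝ), Continuous φ → 
    ∫ θ in (0:ℝ)..t, (t - θ) ^ (p + k) * φ θ = c * ∫ θ in (0:ℝ)..t, (t - θ) ^ p * Jint^[k] φ θ := by
  induction k with
  | zero => exact ⟨1, one_pos, fun φ _ => by simp⟩
  | succ k ih =>
    obtain ⟨c, hc, h⟩ := ih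
    have hk : (0:ℝ) ≤ k := k.cast_nonneg
    refine ⟨(p + k + 1) * c, mul_pos (by linarith) hc, fun φ hφ => ?_⟩
    have h1 := rpow_J (p + k) t (by linarith) ht φ hφ
    push_cast
    rw [← add_assoc, h1, h _ (Jint_cont φ hφ), Function.iterate_succ_apply, mul_assoc]

lemma exists_K (j : ℝ) (hj : 0 ≤ j) : ∃ K S : ℝ → ℝ, (∀ x, HasDerivAt K (S x) x) ∧
    (∀ x, HasDerivAt S (1 - j ^ 2 * K x) x) ∧ K 0 = 0 ∧ S 0 = 0 ∧ (∀ x, 0 ≤ K x) ∧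
    ∃ ε > 0, ∀ x ∈ Ioo 0 ε, 0 < K x := by
  rcases hj.eq_or_lt with rfl | hj
  · refine ⟨fun x => x ^ 2 / 2, fun x => x, fun x => ?_, fun x => ?_, by simp, rfl, fun x => by positivity, 1, one_pos, fun x hx => ?_⟩
    · exact ((hasDerivAt_pow 2 x).div_const 2).congr_deriv (by simp)
    · exact (hasDerivAt_id x).congr_deriv (by simp)
    · have := hx.1; positivity
  · refine ⟨fun x => (1 - Real.cos (j * x)) / j ^ 2, fun x => Real.sin (j * x) / j, fun x => ?_, fun x => ?_, by simp, by simp, fun x => ?_, 1 / j, by positivity, fun x hx => ?_⟩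
    · have h1 : HasDerivAt (fun x => j * x) j x := by simpa using (hasDerivAt_id x).const_mul j
      refine ((h1.cos.const_sub 1).div_const (j^2)).congr_deriv ?_
      field_simp
    · have h1 : HasDerivAt (fun x => j * x) j x := by simpa using (hasDerivAt_id x).const_mul j
      refine (h1.sin.div_const j).congr_deriv ?_
      field_simp
      ring
    · exact div_nonneg (by linarith [Real.cos_le_one (j * x)]) (by positivity)
    · refine div_pos ?_ (by positivity)
      have h1 : 0 < j * x := mul_pos hj hx.1
      have h2 : j * x < 1 := by have := hx.2; rw [lt_div_iff₀ hj] at this; linarith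
      have := Real.cos_lt_cos_of_nonneg_of_le_pi le_rfl (by linarith [Real.pi_gt_three]) h1
      rw [Real.cos_zero] at this
      linarith

lemma ode_repr (j : ℝ) (K S z z1 R r : ℝ → ℝ) (hK : ∀ x, HasDerivAt K (S x) x)
    (hS : ∀ x, HasDerivAt S (1 - j ^ 2 * K x) x) (hK0 : K 0 = 0) (hS0 : S 0 = 0)
    (hz : ∀ x, HasDerivAt z (z1 x) x) (hz1 : ∀ x, HasDerivAt z1 (R x - j ^ 2 * z x) x)
    (hR : ∀ x, HasDerivAt R (r x) x) (hr : Continuous r) (hz0 : z 0 = 0) (hz10 : z1 0 = 0) (t : ℝ) :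
    z t = R 0 * K t + ∫ s in (0:ℝ)..t, r s * K (t - s) := by
  have hKc : Continuous K := continuous_iff_continuousAt.2 fun x => (hK x).continuousAt
  have hd : ∀ s, HasDerivAt (fun s => z1 s * S (t - s) + z s * (1 - j ^ 2 * K (t - s)) + R s * K (t - s))
      (r s * K (t - s)) s := by
    intro s
    have h0 : HasDerivAt (fun s => t - s) (-1) s := (hasDerivAt_id s).const_sub t
    have hK' : HasDerivAt (fun s => K (t - s)) (S (t - s) * (-1)) s := (hK (t - s)).comp s h0
    have hS' : HasDerivAt (fun s => S (t - s)) ((1 - j ^ 2 * K (t - s)) * (-1)) s := (hS (t - s)).comp s h0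
    refine ((((hz1 s).mul hS').add ((hz s).mul ((hK'.const_mul (j ^ 2)).const_sub 1))).add ((hR s).mul hK')).congr_deriv ?_
    ring
  have h := intervalIntegral.integral_eq_sub_of_hasDerivAt (a := 0) (b := t) (fun x _ => hd x)
    ((hr.mul (hKc.comp (continuous_const.sub continuous_id))).intervalIntegrable _ _)
  simp only [sub_self, sub_zero, hK0, hS0, hz0, hz10] at h
  rw [h]; ring

noncomputable def phi (n m : ℕ) : ℝ → ℝ := fun θ => (QQ n m).eval (Real.cos θ)
noncomputable def phi1 (n m : ℕ) : ℝ → ℝ := fun θ => (Polynomial.derivative (QQ n m)).eval (Real.cos θ) * (-Real.sin θ)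
noncomputable def phi2 (n m : ℕ) : ℝ → ℝ := fun θ => (TT (QQ n m)).eval (Real.cos θ)

lemma phi_cont (n m : ℕ) : Continuous (phi n m) := cont_eval_cos _
lemma phi2_cont (n m : ℕ) : Continuous (phi2 n m) := cont_eval_cos _
lemma phi1_cont (n m : ℕ) : Continuous (phi1 n m) := (cont_eval_cos _).mul Real.continuous_sin.neg

lemma phi_deriv (n m : ℕ) (θ : ℝ) : HasDerivAt (phi n m) (phi1 n m θ) θ :=
  ((QQ n m).hasDerivAt (Real.cos θ)).comp θ (Real.hasDerivAt_cos θ)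

lemma phi1_deriv (n m : ℕ) (θ : ℝ) : HasDerivAt (phi1 n m) (phi2 n m θ) θ := by
  have h1 : HasDerivAt (fun θ => (Polynomial.derivative (QQ n m)).eval (Real.cos θ))
    ((Polynomial.derivative (Polynomial.derivative (QQ n m))).eval (Real.cos θ) * (-Real.sin θ)) θ :=
    ((Polynomial.derivative (QQ n m)).hasDerivAt (Real.cos θ)).comp θ (Real.hasDerivAt_cos θ)
  refine (h1.mul (Real.hasDerivAt_sin θ).neg).congr_deriv ?_
  simp only [phi2, TT, Polynomial.eval_sub, Polynomial.eval_mul, eval_pU_cos, eval_pV_cos, Polynomial.eval_ofNat, Pi.neg_apply]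
  have hsin : Real.sin θ = 2 * Real.sin (θ / 2) * Real.cos (θ / 2) := by
    rw [← Real.sin_two_mul]; congr 1; ring
  have hcos : Real.cos θ = Real.cos (θ / 2) ^ 2 - Real.sin (θ / 2) ^ 2 := by
    rw [← Real.cos_two_mul']; congr 1; ring
  generalize Polynomial.eval (Real.cos θ) (Polynomial.derivative (Polynomial.derivative (QQ n m))) = A
  generalize Polynomial.eval (Real.cos θ) (Polynomial.derivative (QQ n m)) = B
  rw [hsin, hcos]; ring

lemma phi1_zero (n m : ℕ) : phi1 n m 0 = 0 := by simp [phi1]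

lemma phi_zero_succ (n m : ℕ) : phi n (m+1) 0 = 0 := by
  simp only [phi, QQ, Polynomial.eval_mul, Polynomial.eval_pow, eval_pU_cos]; simp

lemma phi_zero_zero (n : ℕ) : 0 < phi n 0 0 := by
  have h : phi n 0 0 = jc n (0 - 1/2) (-1/2) 0 := by
    simp only [phi, QQ_eq, Polynomial.eval_finsetSum, Polynomial.eval_mul, Polynomial.eval_pow, Polynomial.eval_C, eval_pU_cos, eval_pV_cos]
    rw [Finset.sum_range_succ', Finset.sum_eq_zero]
    · simp
    · intro k _; simp
  rw [h]; exact jc_zero_pos _ _ _ (by norm_num) (by norm_num)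

lemma JJ_phi2 (n m : ℕ) (θ : ℝ) : Jint (Jint (phi2 n m)) θ = phi n m θ - phi n m 0 := by
  have h : Jint (phi2 n m) = phi1 n m := by
    ext x
    rw [Jint_of_deriv _ _ (phi1_deriv n m) (phi2_cont n m), phi1_zero, sub_zero]
  rw [h, Jint_of_deriv _ _ (phi_deriv n m) (phi1_cont n m)]

noncomputable def zf (n m : ℕ) : ℝ → ℝ := Jint^[m+2] (phi n m)
noncomputable def zf1 (n m : ℕ) : ℝ → ℝ := Jint^[m+1] (phi n m)

lemma zf_cont (n m : ℕ) : Continuous (zf n m) := JI_cont _ _ (phi_cont n m)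
lemma zf_deriv (n m : ℕ) (t : ℝ) : HasDerivAt (zf n m) (zf1 n m t) t := by
  rw [zf, zf1, Function.iterate_succ_apply']
  exact Jint_deriv _ (JI_cont _ _ (phi_cont n m)) t
lemma zf_zero (n m : ℕ) : zf n m 0 = 0 := by
  rw [zf, Function.iterate_succ_apply']; exact Jint_zero _
lemma zf1_zero (n m : ℕ) : zf1 n m 0 = 0 := by
  rw [zf1, Function.iterate_succ_apply']; exact Jint_zero _

lemma zf1_deriv_zero (n : ℕ) (t : ℝ) : HasDerivAt (zf1 n 0) (phi n 0 0 - (n:ℝ) ^ 2 * zf n 0 t) t := by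
  have h : HasDerivAt (zf1 n 0) (phi n 0 t) t := Jint_deriv _ (phi_cont n 0) t
  refine h.congr_deriv ?_
  have h1 : phi2 n 0 = fun x => (-(n:ℝ) ^ 2) * phi n 0 x + 0 * phi n 0 x := by
    ext x
    have := congrArg (fun P => Polynomial.eval (Real.cos x) P) (QQ_zero n)
    simp only [Polynomial.eval_add, Polynomial.eval_mul, Polynomial.eval_C, Polynomial.eval_zero] at this
    simp only [phi2, phi]; linarith
  have h2 := JI_lin 2 (-(n:ℝ) ^ 2) 0 (phi n 0) (phi n 0) (phi_cont n 0) (phi_cont n 0)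
  rw [← h1] at h2
  have h3 := congrFun h2 t
  have h4 := JJ_phi2 n 0 t
  change Jint (Jint (phi2 n 0)) t = _ at h3
  rw [h4] at h3
  simp only [zf, zero_add]
  linarith

lemma zf1_deriv_succ (n m : ℕ) (t : ℝ) : HasDerivAt (zf1 n (m+1))
    (((m:ℝ) + 1) * (n + m + 1/2) * Jint (zf n m) t - ((n:ℝ) + m + 1) ^ 2 * zf n (m+1) t) t := by
  have h : HasDerivAt (zf1 n (m+1)) (Jint^[m+1] (phi n (m+1)) t) t := by
    rw [zf1, Function.iterate_succ_apply']
    exact Jint_deriv _ (JI_cont _ _ (phi_cont n _)) t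
  refine h.congr_deriv ?_
  have h1 : phi2 n (m+1) = fun x => (-((n:ℝ) + m + 1) ^ 2) * phi n (m+1) x + (((m:ℝ) + 1) * (n + m + 1/2)) * phi n m x := by
    ext x
    have := congrArg (fun P => Polynomial.eval (Real.cos x) P) (QQ_succ n m)
    simp only [Polynomial.eval_add, Polynomial.eval_mul, Polynomial.eval_C] at this
    simp only [phi2, phi]; linarith
  have h2 := JI_lin (m+1+2) (-((n:ℝ) + m + 1) ^ 2) (((m:ℝ) + 1) * (n + m + 1/2)) (phi n (m+1)) (phi n m) (phi_cont n _) (phi_cont n _)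
  rw [← h1] at h2
  have h4 : Jint (Jint (phi2 n (m+1))) = phi n (m+1) := by
    ext x; rw [JJ_phi2, phi_zero_succ, sub_zero]
  have h5 : Jint^[m+1+2] (phi2 n (m+1)) = Jint^[m+1] (phi n (m+1)) := by
    rw [Function.iterate_add_apply, show Jint^[2] (phi2 n (m+1)) = Jint (Jint (phi2 n (m+1))) from rfl, h4]
  have h6 : Jint^[m+1+2] (phi n m) = Jint (zf n m) := by
    rw [zf, ← Function.iterate_succ_apply' (f := Jint)]
  rw [h5, h6] at h2
  rw [h2, show zf n (m+1) = Jint^[m+1+2] (phi n (m+1)) from rfl]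
  ring

def OK (z : ℝ → ℝ) : Prop := (∀ t, 0 < t → 0 ≤ z t) ∧ ∀ a b, 0 ≤ a → a < b → ∃ s ∈ Ioo a b, 0 < z s

lemma zf_OK_zero (n : ℕ) : OK (zf n 0) := by
  obtain ⟨K, S, hK, hS, hK0, hS0, hKn, ε, hε, hKp⟩ := exists_K (n:ℝ) n.cast_nonneg
  have hκ := phi_zero_zero n
  have hnn : ∀ t, 0 < t → 0 ≤ zf n 0 t := by
    intro t _
    rw [ode_repr (n:ℝ) K S (zf n 0) (zf1 n 0) (fun _ => phi n 0 0) (fun _ => 0) hK hS hK0 hS0 (zf_deriv n 0)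
      (zf1_deriv_zero n) (fun x => hasDerivAt_const x _) continuous_const (zf_zero n 0) (zf1_zero n 0) t]
    simp only [zero_mul, intervalIntegral.integral_zero, add_zero]
    exact mul_nonneg hκ.le (hKn t)
  refine ⟨hnn, fun a b ha hab => ?_⟩
  by_contra hcon
  push Not at hcon
  have hz : ∀ s ∈ Ioo a b, zf n 0 s = 0 := fun s hs => le_antisymm (hcon s hs) (hnn s (by linarith [hs.1]))
  have hz1 : ∀ s ∈ Ioo a b, zf1 n 0 s = 0 := by
    intro s hs
    have h1 : HasDerivAt (zf n 0) 0 s := (hasDerivAt_const s (0:ℝ)).congr_of_eventuallyEq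
      (Filter.eventually_of_mem (Ioo_mem_nhds hs.1 hs.2) hz)
    exact (zf_deriv n 0 s).unique h1
  have hs : (a + b) / 2 ∈ Ioo a b := ⟨by linarith, by linarith⟩
  have h1 : HasDerivAt (zf1 n 0) 0 ((a+b)/2) := (hasDerivAt_const _ (0:ℝ)).congr_of_eventuallyEq
      (Filter.eventually_of_mem (Ioo_mem_nhds hs.1 hs.2) hz1)
  have h2 := (zf1_deriv_zero n _).unique h1
  rw [hz _ hs] at h2
  linarith

lemma zf_pos_succ (n m : ℕ) (h : OK (zf n m)) (t : ℝ) (ht : 0 < t) : 0 < zf n (m+1) t := by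
  obtain ⟨K, S, hK, hS, hK0, hS0, hKn, ε, hε, hKp⟩ := exists_K ((n:ℝ) + m + 1) (by positivity)
  have hKc : Continuous K := continuous_iff_continuousAt.2 fun x => (hK x).continuousAt
  have hD : 0 < ((m:ℝ) + 1) * (n + m + 1/2) := by positivity
  rw [ode_repr ((n:ℝ) + m + 1) K S (zf n (m+1)) (zf1 n (m+1)) (fun x => ((m:ℝ) + 1) * (n + m + 1/2) * Jint (zf n m) x)
    (fun x => ((m:ℝ) + 1) * (n + m + 1/2) * zf n m x) hK hS hK0 hS0 (zf_deriv n _)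
      (zf1_deriv_succ n m) (fun x => (Jint_deriv _ (zf_cont n m) x).const_mul _) (continuous_const.mul (zf_cont n m)) (zf_zero n _) (zf1_zero n _) t]
  rw [Jint_zero, mul_zero, zero_mul, zero_add]
  obtain ⟨s, hs, hsp⟩ := h.2 (max 0 (t - ε)) t (le_max_left _ _) (max_lt ht (by linarith))
  have hs0 : 0 < s := lt_of_le_of_lt (le_max_left _ _) hs.1
  have hs1 : t - ε < s := lt_of_le_of_lt (le_max_right _ _) hs.1
  refine intervalIntegral.integral_pos ht ?_ ?_ ⟨s, ⟨hs0.le, hs.2.le⟩, ?_⟩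
  · exact ((continuous_const.mul (zf_cont n m)).mul (hKc.comp (continuous_const.sub continuous_id))).continuousOn
  · intro x hx
    exact mul_nonneg (mul_nonneg hD.le (h.1 x hx.1)) (hKn _)
  · exact mul_pos (mul_pos hD hsp) (hKp _ ⟨by linarith [hs.2], by linarith⟩)

lemma OK_of_pos (z : ℝ → ℝ) (h : ∀ t, 0 < t → 0 < z t) : OK z :=
  ⟨fun t ht => (h t ht).le, fun a b ha hab => ⟨(a+b)/2, ⟨by linarith, by linarith⟩, h _ (by linarith)⟩⟩

lemma zf_pos (n m : ℕ) : ∀ t, 0 < t → 0 < zf n (m+1) t := by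
  induction m with
  | zero => exact zf_pos_succ n 0 (zf_OK_zero n)
  | succ m ih => exact zf_pos_succ n (m+1) (OK_of_pos _ ih)

lemma FJ_base (n m : ℕ) (hm : 1 ≤ m) (δ t : ℝ) (hδ : (m:ℝ) + 1 ≤ δ) (ht : t ∈ Ioc 0 π) : 0 < FJ n m 0 δ t := by
  obtain ⟨m, rfl⟩ : ∃ k, m = k + 1 := ⟨m - 1, by omega⟩
  have hz := zf_pos n m
  have e : FJ n (m+1:ℕ) 0 δ t = ∫ θ in (0:ℝ)..t, (t - θ) ^ δ * phi n (m+1) θ := by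
    rw [FJ]
    refine intervalIntegral.integral_congr fun θ hθ => ?_
    simp only [phi, QQ, Polynomial.eval_mul, Polynomial.eval_pow, eval_pU_cos, JP_eval]
    rw [show (2:ℝ) * ((m+1:ℕ):ℝ) = ((2 * (m+1) : ℕ):ℝ) by push_cast; ring, Real.rpow_natCast, mul_zero, Real.rpow_zero,
      ← pow_mul, show (0:ℝ) - 1/2 = -1/2 by norm_num]
    ring
  rw [e]
  rcases hδ.eq_or_lt with h | h
  · obtain ⟨c, hc, hi⟩ := rpow_JI (m+1+1) 0 t (by norm_num) ht.1
    have h2 := hi _ (phi_cont n (m+1))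
    rw [show (0:ℝ) + ((m+1+1:ℕ):ℝ) = δ by rw [← h]; push_cast; ring] at h2
    rw [h2]
    simp only [Real.rpow_zero, one_mul]
    have h3 := hz t ht.1
    rw [zf, Function.iterate_succ_apply'] at h3
    exact mul_pos hc h3
  · have hp : -1 < δ - ((m+1+2:ℕ):ℝ) := by push_cast at *; linarith
    obtain ⟨c, hc, hi⟩ := rpow_JI (m+1+2) (δ - ((m+1+2:ℕ):ℝ)) t hp ht.1
    have h2 := hi _ (phi_cont n (m+1))
    rw [sub_add_cancel] at h2
    rw [h2]
    refine mul_pos hc (intervalIntegral.intervalIntegral_pos_of_pos_on ?_ ?_ ht.1)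
    · exact rpow_int _ t hp _ (JI_cont _ _ (phi_cont _ _))
    · intro x hx
      exact mul_pos (Real.rpow_pos_of_pos (by linarith [hx.2]) _) (hz x hx.1)

lemma FJ_nat (m : ℕ) (hm : 1 ≤ m) (δ t a : ℝ) (ha : 0 ≤ a) (hδ : (m:ℝ) + 1 ≤ δ) (ht : t ∈ Ioc 0 π)
    (h : ∀ n, 0 < FJ n a 0 δ t) (k : ℕ) : ∀ n, 0 < FJ n a k δ t := by
  have hm' : (0:ℝ) ≤ m := m.cast_nonneg
  induction k with
  | zero => simpa using h
  | succ k ih =>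
    push_cast
    exact FJ_raise a k δ t ha k.cast_nonneg (by linarith) ht ih

lemma max_half_diff (a b x : ℝ) (hab : a ≤ b) (hx : 0 ≤ x) :
    max b (2 * x) - max b x ≤ max a (2 * x) - max a x := by
  rcases max_cases b (2*x) with h1 | h1 <;> rcases max_cases b x with h2 | h2 <;>
  rcases max_cases a (2*x) with h3 | h3 <;> rcases max_cases a x with h4 | h4 <;> linarith

lemma max_half_le (a x : ℝ) (ha : 0 ≤ a) (hx : 0 ≤ x) : max a (2 * x) ≤ 2 * max a x :=
  max_le (by linarith [le_max_left a x]) (by linarith [le_max_right a x])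

lemma descend1 (a x δ t : ℝ) (ha : 0 ≤ a) (hx : 0 ≤ x) (hδ : 0 < δ) (ht : t ∈ Ioc 0 π)
    (h : ∀ n, 0 < FJ n (max a x) 0 δ t) (j : ℕ) : ∀ n, 0 < FJ n (max a (x / 2 ^ j)) 0 δ t := by
  induction j with
  | zero => simpa using h
  | succ j ih =>
    have hy : 0 ≤ x / 2 ^ (j+1) := by positivity
    rw [show x / 2 ^ j = 2 * (x / 2 ^ (j+1)) by field_simp; ring] at ih
    generalize x / 2 ^ (j+1) = y at *
    exact FJ_step _ _ _ _ δ t ⟨le_max_of_le_left ha, le_rfl, Or.inr ⟨max_le_max le_rfl (by linarith), rfl⟩⟩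
      (max_half_le a y ha hy) (by simp) hδ ht ih

lemma descend2 (a b x δ t : ℝ) (ha : 0 ≤ a) (hab : a ≤ b) (hx : 0 ≤ x) (hδ : 0 < δ) (ht : t ∈ Ioc 0 π)
    (h : ∀ n, 0 < FJ n (max a x) (max b x) δ t) (j : ℕ) :
    ∀ n, 0 < FJ n (max a (x / 2 ^ j)) (max b (x / 2 ^ j)) δ t := by
  induction j with
  | zero => simpa using h
  | succ j ih =>
    have hy : 0 ≤ x / 2 ^ (j+1) := by positivity
    rw [show x / 2 ^ j = 2 * (x / 2 ^ (j+1)) by field_simp; ring] at ih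
    generalize x / 2 ^ (j+1) = y at *
    exact FJ_step _ _ _ _ δ t ⟨le_max_of_le_left ha, le_max_of_le_right hy,
      Or.inl ⟨max_le_max hab le_rfl, max_le_max le_rfl (by linarith), max_half_diff a b y hab hy⟩⟩
      (max_half_le a y ha hy) (max_half_le b y (ha.trans hab) hy) hδ ht ih

theorem FJ_pos_noninteger_alpha (α β : ℝ) (hα : 0 < α)
    (hαnotint : ∀ k : ℤ, α ≠ (k : ℝ)) (hβ : 0 ≤ β) (δ : ℝ)
    (hδ : ((⌈α⌉ : ℤ) : ℝ) + 1 ≤ δ)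
    (hcase : (∃ k : ℕ, β = (k : ℝ)) ∨ α = β ∨ (((⌊β⌋ : ℤ) : ℝ) < α ∧ α ≤ β)) :
    ∀ t ∈ Set.Ioc (0:ℝ) π, ∀ n : ℕ, 0 < FJ n α β δ t := by
  intro t ht
  have hc : 0 < ⌈α⌉ := Int.ceil_pos.2 hα
  obtain ⟨m, hm⟩ := Int.eq_ofNat_of_zero_le hc.le
  have hm1 : 1 ≤ m := by omega
  have hle := Int.le_ceil α
  rw [hm] at hδ hle
  push_cast at hδ hle
  have hm0 : (0:ℝ) ≤ m := m.cast_nonneg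
  have hδ0 : 0 < δ := by linarith
  have hbase : ∀ n, 0 < FJ n m 0 δ t := fun n => FJ_base n m hm1 δ t hδ ht
  obtain ⟨j, hj⟩ : ∃ j : ℕ, (m:ℝ) / 2 ^ j ≤ α := by
    obtain ⟨j, hj⟩ := pow_unbounded_of_one_lt ((m:ℝ) / α) (one_lt_two : (1:ℝ) < 2)
    refine ⟨j, ?_⟩
    rw [div_lt_iff₀ hα] at hj
    rw [div_le_iff₀ (by positivity)]
    linarith
  rcases hcase with ⟨k, rfl⟩ | h3
  · refine FJ_nat m hm1 δ t α hα.le hδ ht ?_ k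
    have := descend1 α m δ t hα.le hm0 hδ0 ht (by rwa [max_eq_right hle]) j
    rwa [max_eq_left hj] at this
  · have h3' : ((⌊β⌋ : ℤ) : ℝ) < α ∧ α ≤ β := by
      rcases h3 with rfl | h3
      · exact ⟨lt_of_le_of_ne (Int.floor_le α) (hαnotint _).symm, le_rfl⟩
      · exact h3
    have hbm : β ≤ m := by
      have h4 : ⌊β⌋ < ⌈α⌉ := Int.lt_ceil.2 h3'.1
      rw [hm] at h4
      have h5 : ((⌊β⌋ : ℤ) : ℝ) + 1 ≤ ((m:ℤ):ℝ) := by exact_mod_cast h4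
      push_cast at h5
      linarith [Int.lt_floor_add_one β]
    have hmm := FJ_nat m hm1 δ t m hm0 hδ ht hbase m
    have := descend2 α β m δ t hα.le h3'.2 hm0 hδ0 ht (by rwa [max_eq_right hle, max_eq_right hbm]) j
    rwa [max_eq_left hj, max_eq_left (hj.trans h3'.2)] at this
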